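/- Consider the singular ODE z h (dW/dz) = blockdiag(A_{11}, A_{22})(z,h) W + h^p Θ(z,h) W, p ≥ 1, where A_{11}, A_{22}, Θ are analytic in z and continuous in h on B(0,r) × (0,h₀] ⊂ ℂ × ℝ⁺, and suppose A_{11}(0) and A_{22}(0) have no eigenvalues in common. Then there exists a uniformly bounded block-diagonalizing conjugator T = Id + O(h^p), with uniformly bounded inverse, which is analytic in z on a slit ball around z = 0 with branch cut along the negative real axis and continuous at z = 0. -/

import Mathlib

open Set

attribute [local instance] Matrix.linftyOpNormedAddCommGroup Matrix.linftyOpNormedRing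
  Matrix.linftyOpNormedAlgebra Matrix.linftyOpNormedSpace

/-- The slit ball `{ z ∈ ℂ : 0 < |z| < ρ, z ∉ (−∞,0] }` around `0`, with branch cut along
the negative real axis. -/
def SlitBall (ρ : ℝ) : Set ℂ := {z : ℂ | ‖z‖ < ρ ∧ (z.im ≠ 0 ∨ 0 < z.re)}

section Helpers
open MeasureTheory Filter Topology


/-- Differentiating a parametric integral along a semigroup of affine maps. -/
lemma kernel_deriv (U : Set ℂ) (hU : IsOpen U) (lam : ℂ) (h : ℝ) (hh : 0 < h)
    (α α' χ χ' : ℝ → ℂ) (hα : ∀ x, HasDerivAt α (α' x) x) (hχ : ∀ x, HasDerivAt χ (χ' x) x)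
    (hα' : Continuous α') (hχ' : Continuous χ') (hα0 : α 0 = 0) (hχ0 : χ 0 = 1)
    (hφ : ∀ x, 0 ≤ x → ∀ t ∈ U, α x + χ x * t ∈ U)
    (k : ℂ → ℝ → ℂ)
    (hk : k = fun t x => Complex.exp (lam * (t - (α x + χ x * t)) / h) * (α' x + χ' x * t) * (-1 / h))
    (hdom : ∀ t₀ ∈ U, ∃ ε > 0, ∃ b : ℝ → ℝ, IntegrableOn b (Ioi 0) ∧
      ∀ t ∈ Metric.ball t₀ ε, ∀ x > 0, ‖k t x‖ ≤ b x)
    (hQ : ∀ t ∈ U, Tendsto (fun x => Complex.exp (lam * (t - (α x + χ x * t)) / h) * χ x) atTop (𝓝 0))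
    (g : ℂ → ℂ) (hg : DifferentiableOn ℂ g U) (M : ℝ) (hM : ∀ s ∈ U, ‖g s‖ ≤ M)
    (t₀ : ℂ) (ht₀ : t₀ ∈ U) :
    IntegrableOn (fun x => k t₀ x * g (α x + χ x * t₀)) (Ioi 0) ∧
    HasDerivAt (fun t => ∫ x in Ioi (0:ℝ), k t x * g (α x + χ x * t))
      ((lam * (∫ x in Ioi (0:ℝ), k t₀ x * g (α x + χ x * t₀)) + g t₀) / h) t₀ := by
  have hM0 : 0 ≤ M := (norm_nonneg _).trans (hM t₀ ht₀)
  have hhc : (h : ℂ) ≠ 0 := by exact_mod_cast hh.ne'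
  have hαc : Continuous α := continuous_iff_continuousAt.2 fun x => (hα x).continuousAt
  have hχc : Continuous χ := continuous_iff_continuousAt.2 fun x => (hχ x).continuousAt
  have hkc : ∀ t, Continuous (k t) := by
    intro t; rw [hk]; fun_prop
  have hg' : ContinuousOn (deriv g) U := (hg.deriv hU).continuousOn
  have hgd : ∀ s ∈ U, HasDerivAt g (deriv g s) s := fun s hs =>
    (hg.differentiableAt (hU.mem_nhds hs)).hasDerivAt
  have hφc : ∀ t ∈ U, ContinuousOn (fun x => α x + χ x * t) (Ici 0) := fun t _ => by fun_prop
  have hFc : ∀ t ∈ U, ContinuousOn (fun x => k t x * g (α x + χ x * t)) (Ici 0) := fun t ht =>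
    (hkc t).continuousOn.mul (hg.continuousOn.comp (hφc t ht) fun x hx => hφ x hx t ht)
  obtain ⟨ε₁, hε₁, b, hb, hbd⟩ := hdom t₀ ht₀
  obtain ⟨ε₂, hε₂, hball⟩ := Metric.isOpen_iff.1 hU t₀ ht₀
  set ε := min ε₁ ε₂ with hε
  have hε0 : 0 < ε := lt_min hε₁ hε₂
  have hsub1 : Metric.ball t₀ ε ⊆ Metric.ball t₀ ε₁ := Metric.ball_subset_ball (min_le_left _ _)
  have hsub2 : Metric.ball t₀ ε ⊆ U := (Metric.ball_subset_ball (min_le_right _ _)).trans hball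
  set F' : ℂ → ℝ → ℂ := fun t x =>
    (lam * (1 - χ x) / h * k t x + Complex.exp (lam * (t - (α x + χ x * t)) / h) * χ' x * (-1 / h))
      * g (α x + χ x * t) + k t x * (deriv g (α x + χ x * t) * χ x) with hF'
  have hFd : ∀ t ∈ U, ∀ x, 0 ≤ x →
      HasDerivAt (fun t => k t x * g (α x + χ x * t)) (F' t x) t := by
    intro t ht x hx
    have h1 : HasDerivAt (fun t => α x + χ x * t) (χ x) t := by
      simpa using ((hasDerivAt_id t).const_mul (χ x)).const_add (α x)
    have h2 : HasDerivAt (fun t => α' x + χ' x * t) (χ' x) t := by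
      simpa using ((hasDerivAt_id t).const_mul (χ' x)).const_add (α' x)
    have h3 : HasDerivAt (fun t => lam * (t - (α x + χ x * t)) / h) (lam * (1 - χ x) / h) t :=
      (((hasDerivAt_id t).sub h1).const_mul lam).div_const _
    have h4 := ((h3.cexp.mul h2).mul_const (-1 / (h:ℂ))).mul ((hgd _ (hφ x hx t ht)).comp t h1)
    rw [hF', hk]
    refine HasDerivAt.congr_deriv h4 ?_
    simp only [Pi.mul_apply, Function.comp_apply]
    ring
  have hnormF : ∀ t ∈ Metric.ball t₀ ε, ∀ x > 0, ‖k t x * g (α x + χ x * t)‖ ≤ b x * M := by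
    intro t ht x hx
    rw [norm_mul]
    have := hbd t (hsub1 ht) x hx
    have h2 := hM _ (hφ x hx.le t (hsub2 ht))
    exact mul_le_mul this h2 (norm_nonneg _) ((norm_nonneg _).trans this)
  have hF'b : ∀ t ∈ Metric.ball t₀ (ε/2), ∀ x > 0, ‖F' t x‖ ≤ b x * M / (ε/4) := by
    intro t ht x hx
    have hcb : Metric.closedBall t (ε/4) ⊆ Metric.ball t₀ ε := by
      intro s hs
      rw [Metric.mem_closedBall] at hs
      rw [Metric.mem_ball] at ht ⊢
      linarith [dist_triangle s t t₀]
    have htU : t ∈ U := hsub2 (hcb (Metric.mem_closedBall_self (by positivity)))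
    rw [← (hFd t htU x hx.le).deriv]
    apply Complex.norm_deriv_le_of_forall_mem_sphere_norm_le (by positivity)
    · apply DifferentiableOn.diffContOnCl
      rw [closure_ball _ (by positivity)]
      intro s hs
      exact (hFd s (hsub2 (hcb hs)) x hx.le).differentiableAt.differentiableWithinAt
    · intro s hs
      exact hnormF s (hcb (Metric.sphere_subset_closedBall hs)) x hx
  have hFm : ∀ t ∈ U, AEStronglyMeasurable (fun x => k t x * g (α x + χ x * t))
      (volume.restrict (Ioi 0)) := fun t ht =>
    ((hFc t ht).mono Ioi_subset_Ici_self).aestronglyMeasurable measurableSet_Ioi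
  have hFi : IntegrableOn (fun x => k t₀ x * g (α x + χ x * t₀)) (Ioi 0) := by
    refine Integrable.mono' (hb.mul_const M) (hFm t₀ ht₀) ?_
    filter_upwards [ae_restrict_mem measurableSet_Ioi] with x hx
    exact hnormF t₀ (Metric.mem_ball_self hε0) x hx
  have hF'c : ContinuousOn (F' t₀) (Ici 0) := by
    have e1 := hg.continuousOn.comp (hφc t₀ ht₀) fun x hx => hφ x hx t₀ ht₀
    have e2 := hg'.comp (hφc t₀ ht₀) fun x hx => hφ x hx t₀ ht₀
    have e3 := (hkc t₀).continuousOn (s := Ici 0)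
    refine ContinuousOn.add (ContinuousOn.mul ?_ e1) (e3.mul (e2.mul hχc.continuousOn))
    have := hkc t₀
    exact Continuous.continuousOn (by fun_prop)
  have key := hasDerivAt_integral_of_dominated_loc_of_deriv_le (μ := volume.restrict (Ioi (0:ℝ)))
    (F := fun t x => k t x * g (α x + χ x * t)) (F' := F') (x₀ := t₀) (s := Metric.ball t₀ (ε/2))
    (bound := fun x => b x * M / (ε/4))
    (Metric.ball_mem_nhds _ (by positivity))
    (by filter_upwards [hU.mem_nhds ht₀] with t ht using hFm t ht) hFi
    ((hF'c.mono Ioi_subset_Ici_self).aestronglyMeasurable measurableSet_Ioi)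
    (by filter_upwards [ae_restrict_mem measurableSet_Ioi] with x hx t ht using hF'b t ht x hx)
    ((hb.mul_const M).div_const _)
    (by
      filter_upwards [ae_restrict_mem measurableSet_Ioi] with x hx t ht
      exact hFd t (hsub2 (Metric.ball_subset_ball (by linarith) ht)) x (le_of_lt hx))
  refine ⟨hFi, ?_⟩
  obtain ⟨hF'i, hder⟩ := key
  -- the fundamental theorem of calculus
  set Q : ℝ → ℂ := fun x => Complex.exp (lam * (t₀ - (α x + χ x * t₀)) / h) * χ x
    * g (α x + χ x * t₀) * (-1 / h) with hQdef
  have hQd : ∀ x ∈ Ici (0:ℝ), HasDerivAt Q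
      (F' t₀ x - lam / h * (k t₀ x * g (α x + χ x * t₀))) x := by
    intro x hx
    have h1 : HasDerivAt (fun x => α x + χ x * t₀) (α' x + χ' x * t₀) x :=
      (hα x).add ((hχ x).mul_const t₀)
    have h3 : HasDerivAt (fun x => lam * (t₀ - (α x + χ x * t₀)) / h)
        (lam * (-(α' x + χ' x * t₀)) / h) x :=
      ((h1.const_sub t₀).const_mul lam).div_const _
    have h5 : HasDerivAt (fun x => Complex.exp (lam * (t₀ - (α x + χ x * t₀)) / h)) _ x := h3.cexp
    have h6 : HasDerivAt (fun x => g (α x + χ x * t₀)) _ x :=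
      (hgd _ (hφ x hx t₀ ht₀)).comp x h1
    have h4 := ((h5.mul (hχ x)).mul h6).mul_const (-1 / (h:ℂ))
    rw [hF', hk]
    refine HasDerivAt.congr_deriv h4 ?_
    simp only [Pi.mul_apply]
    ring
  have hQt : Tendsto Q atTop (𝓝 0) := by
    have e1 : Tendsto (fun x => ‖Complex.exp (lam * (t₀ - (α x + χ x * t₀)) / h) * χ x‖ * (M * ‖(-1 / (h:ℂ))‖))
        atTop (𝓝 0) := by
      simpa using (hQ t₀ ht₀).norm.mul_const (M * ‖(-1 / (h:ℂ))‖)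
    refine squeeze_zero_norm' ?_ e1
    filter_upwards [eventually_ge_atTop 0] with x hx
    rw [hQdef]
    simp only
    rw [norm_mul, norm_mul _ (g _), mul_assoc]
    have := hM _ (hφ x hx t₀ ht₀)
    gcongr
  have hintg : ∫ x in Ioi (0:ℝ), (F' t₀ x - lam / h * (k t₀ x * g (α x + χ x * t₀))) = 0 - Q 0 :=
    integral_Ioi_of_hasDerivAt_of_tendsto' hQd (hF'i.sub (hFi.const_mul _)) hQt
  rw [integral_sub hF'i (hFi.const_mul _), integral_const_mul] at hintg
  have hQ0 : Q 0 = - g t₀ / h := by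
    rw [hQdef]; simp [hα0, hχ0]; ring
  rw [hQ0] at hintg
  refine HasDerivAt.congr_deriv hder ?_
  rw [sub_eq_iff_eq_add] at hintg
  rw [hintg]
  generalize (∫ x in Ioi (0:ℝ), k t₀ x * g (α x + χ x * t₀)) = I
  ring


/-- The sector `{|Im t| < κ (a - Re t)}` with apex `a`. -/
def Sector (κ a : ℝ) : Set ℂ := {t : ℂ | |t.im| < κ * (a - t.re)}

lemma isOpen_sector (κ a : ℝ) : IsOpen (Sector κ a) := by
  apply isOpen_lt <;> fun_prop

/-- Properties of a solution operator for `h u' = lam u + g`. -/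
def IsSolver (U : Set ℂ) (lam : ℂ) (h K : ℝ) (J : (ℂ → ℂ) → ℂ → ℂ) : Prop :=
  (∀ g, DifferentiableOn ℂ g U → (∃ M, ∀ s ∈ U, ‖g s‖ ≤ M) → ∀ t ∈ U,
    HasDerivAt (J g) ((lam * J g t + g t) / h) t) ∧
  (∀ g₁ g₂, DifferentiableOn ℂ g₁ U → DifferentiableOn ℂ g₂ U →
    (∃ M, ∀ s ∈ U, ‖g₁ s‖ ≤ M) → (∃ M, ∀ s ∈ U, ‖g₂ s‖ ≤ M) →
    ∀ D, (∀ s ∈ U, ‖g₁ s - g₂ s‖ ≤ D) → ∀ t ∈ U, ‖J g₁ t - J g₂ t‖ ≤ K * D) ∧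
  (∀ t ∈ U, J (fun _ => 0) t = 0)

lemma kernel_solver (U : Set ℂ) (hU : IsOpen U) (lam : ℂ) (h K : ℝ) (hh : 0 < h)
    (α α' χ χ' : ℝ → ℂ) (hα : ∀ x, HasDerivAt α (α' x) x) (hχ : ∀ x, HasDerivAt χ (χ' x) x)
    (hα' : Continuous α') (hχ' : Continuous χ') (hα0 : α 0 = 0) (hχ0 : χ 0 = 1)
    (hφ : ∀ x, 0 ≤ x → ∀ t ∈ U, α x + χ x * t ∈ U)
    (k : ℂ → ℝ → ℂ)
    (hk : k = fun t x => Complex.exp (lam * (t - (α x + χ x * t)) / h) * (α' x + χ' x * t) * (-1 / h))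
    (hdom : ∀ t₀ ∈ U, ∃ ε > 0, ∃ b : ℝ → ℝ, IntegrableOn b (Ioi 0) ∧
      ∀ t ∈ Metric.ball t₀ ε, ∀ x > 0, ‖k t x‖ ≤ b x)
    (hQ : ∀ t ∈ U, Tendsto (fun x => Complex.exp (lam * (t - (α x + χ x * t)) / h) * χ x) atTop (𝓝 0))
    (hK : ∀ t ∈ U, ∃ b : ℝ → ℝ, IntegrableOn b (Ioi 0) ∧ (∀ x > 0, ‖k t x‖ ≤ b x) ∧
      ∫ x in Ioi (0:ℝ), b x ≤ K) :
    ∃ J, IsSolver U lam h K J := by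
  refine ⟨fun g t => ∫ x in Ioi (0:ℝ), k t x * g (α x + χ x * t), ?_, ?_, ?_⟩
  · rintro g hg ⟨M, hM⟩ t ht
    exact (kernel_deriv U hU lam h hh α α' χ χ' hα hχ hα' hχ' hα0 hχ0 hφ k hk hdom hQ g hg M hM t ht).2
  · rintro g₁ g₂ hg₁ hg₂ ⟨M₁, hM₁⟩ ⟨M₂, hM₂⟩ D hD t ht
    have i1 := (kernel_deriv U hU lam h hh α α' χ χ' hα hχ hα' hχ' hα0 hχ0 hφ k hk hdom hQ
      g₁ hg₁ M₁ hM₁ t ht).1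
    have i2 := (kernel_deriv U hU lam h hh α α' χ χ' hα hχ hα' hχ' hα0 hχ0 hφ k hk hdom hQ
      g₂ hg₂ M₂ hM₂ t ht).1
    have hD0 : 0 ≤ D := (norm_nonneg _).trans (hD t ht)
    obtain ⟨b, hb, hkb, hbK⟩ := hK t ht
    simp only
    rw [← integral_sub i1 i2]
    calc _ ≤ ∫ x in Ioi (0:ℝ), b x * D := by
          apply norm_integral_le_of_norm_le (hb.mul_const D)
          filter_upwards [ae_restrict_mem measurableSet_Ioi] with x hx
          rw [← mul_sub, norm_mul]
          have := hkb x hx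
          exact mul_le_mul this (hD _ (hφ x (le_of_lt hx) t ht)) (norm_nonneg _)
            ((norm_nonneg _).trans this)
      _ = (∫ x in Ioi (0:ℝ), b x) * D := integral_mul_const _ _
      _ ≤ K * D := by gcongr
  · intro t ht
    simp

lemma solver_stable (κ a c h : ℝ) (hκ : 0 ≤ κ) (hc : 0 < c) (hh : 0 < h) (lam v : ℂ)
    (hv1 : v.re = 1) (hv2 : |v.im| ≤ κ) (hv : ‖v‖ ≤ 2) (hl : (lam * v).re ≤ -c) :
    ∃ J, IsSolver (Sector κ a) lam h (2 / c) J := by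
  have hb : IntegrableOn (fun x : ℝ => 2 / h * Real.exp (-(c / h) * x)) (Ioi 0) :=
    (integrableOn_exp_mul_Ioi (by have := div_pos hc hh; linarith) 0).const_mul _
  have hnorm : ∀ t : ℂ, ∀ x : ℝ, 0 ≤ x →
      ‖Complex.exp (lam * (t - (-(x * v) + 1 * t)) / h)‖ ≤ Real.exp (-(c / h) * x) := by
    intro t x hx
    rw [Complex.norm_exp]
    apply Real.exp_le_exp.2
    have : lam * (t - (-(x * v) + 1 * t)) / h = ((x / h : ℝ) : ℂ) * (lam * v) := by
      push_cast; ring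
    rw [this, Complex.re_ofReal_mul]
    have h1 : 0 ≤ x / h := by positivity
    calc x / h * (lam * v).re ≤ x / h * (-c) := by gcongr
      _ = _ := by ring
  have hkb : ∀ t : ℂ, ∀ x : ℝ, 0 < x →
      ‖Complex.exp (lam * (t - (-(x * v) + 1 * t)) / h) * (-v + 0 * t) * (-1 / h)‖
        ≤ 2 / h * Real.exp (-(c / h) * x) := by
    intro t x hx
    rw [norm_mul, norm_mul]
    have e1 : ‖(-1 / h : ℂ)‖ = 1 / h := by
      rw [norm_div]; simp [abs_of_pos hh]
    have e2 : ‖-v + 0 * t‖ ≤ 2 := by simpa using hv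
    rw [e1]
    calc _ ≤ Real.exp (-(c / h) * x) * 2 * (1 / h) := by
          have := hnorm t x hx.le
          gcongr
      _ = _ := by ring
  refine kernel_solver (Sector κ a) (isOpen_sector κ a) lam h (2 / c) hh (fun x => -(x * v))
    (fun _ => -v) (fun _ => 1) (fun _ => 0) ?_ ?_ (by fun_prop) (by fun_prop) (by simp) rfl ?_ _ rfl
    ?_ ?_ ?_
  · intro x
    refine ((Complex.ofRealCLM.hasDerivAt (x := x)).mul_const v).neg.congr_deriv ?_
    simp
  · intro x; exact hasDerivAt_const _ _
  · intro x hx t ht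
    simp only [Sector, mem_ofPred_eq] at ht ⊢
    have e1 : (-(x * v) + 1 * t).im = t.im - x * v.im := by simp; ring
    have e2 : (-(x * v) + 1 * t).re = t.re - x := by simp [hv1]; ring
    rw [e1, e2]
    have : |t.im - x * v.im| ≤ |t.im| + |x * v.im| := abs_sub _ _
    rw [abs_mul, abs_of_nonneg hx] at this
    nlinarith
  · intro t ht
    exact ⟨1, one_pos, _, hb, fun s _ x hx => hkb s x hx⟩
  · intro t ht
    have : Tendsto (fun x : ℝ => Real.exp (-(c / h) * x)) atTop (𝓝 0) := by
      apply Real.tendsto_exp_atBot.comp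
      exact tendsto_id.const_mul_atTop_of_neg (by have := div_pos hc hh; linarith)
    refine squeeze_zero_norm' ?_ this
    filter_upwards [eventually_ge_atTop 0] with x hx
    simpa using hnorm t x hx
  · intro t ht
    refine ⟨_, hb, fun x hx => hkb t x hx, ?_⟩
    rw [integral_const_mul, integral_exp_mul_Ioi (by have := div_pos hc hh; linarith)]
    simp
    apply le_of_eq
    field_simp

lemma solver_unstable (κ a c h : ℝ) (hκ : 0 < κ) (hκ1 : κ ≤ 1 / 2) (hc : 0 < c) (hh : 0 < h) (lam : ℂ)
    (hl1 : c ≤ lam.re - κ * lam.im) (hl2 : c ≤ lam.re + κ * lam.im) :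
    ∃ J, IsSolver (Sector κ a) lam h (2 / c) J := by
  have hw : ∀ t ∈ Sector κ a, 0 < a - t.re ∧ c * (a - t.re) ≤ (lam * (a - t)).re ∧
      ‖(a:ℂ) - t‖ ≤ 2 * (a - t.re) := by
    intro t ht
    simp only [Sector, mem_ofPred_eq] at ht
    have h0 : 0 < a - t.re := by
      have := (abs_nonneg _).trans_lt ht
      exact (pos_iff_pos_of_mul_pos this).1 hκ
    have h1 := abs_lt.1 ht
    refine ⟨h0, ?_, ?_⟩
    · have e : (lam * (a - t)).re = lam.re * (a - t.re) + lam.im * t.im := by simp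
      rw [e]
      have k1 := mul_le_mul_of_nonneg_right hl1 (show 0 ≤ κ * (a - t.re) - t.im by linarith)
      have k2 := mul_le_mul_of_nonneg_right hl2 (show 0 ≤ κ * (a - t.re) + t.im by linarith)
      have : κ * (c * (a - t.re)) ≤ κ * (lam.re * (a - t.re) + lam.im * t.im) := by nlinarith
      exact le_of_mul_le_mul_left this hκ
    · refine (Complex.norm_le_abs_re_add_abs_im _).trans ?_
      simp only [Complex.sub_re, Complex.ofReal_re, Complex.sub_im, Complex.ofReal_im, zero_sub, abs_neg]
      rw [abs_of_pos h0]
      nlinarith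
  have hex : ∀ x : ℝ, 0 ≤ x → 0 ≤ 1 - Real.exp (-x) := fun x hx => by
    have := Real.exp_le_one_iff.2 (neg_nonpos.2 hx); linarith
  have hnorm : ∀ t : ℂ, ∀ x : ℝ,
      ‖Complex.exp (lam * (t - (a * (1 - (Real.exp (-x) : ℝ)) + ((Real.exp (-x) : ℝ) : ℂ) * t)) / h)‖ =
        Real.exp (-((lam * (a - t)).re / h) * (1 - Real.exp (-x))) := by
    intro t x
    rw [Complex.norm_exp]
    have : lam * (t - (a * (1 - (Real.exp (-x) : ℝ)) + ((Real.exp (-x) : ℝ) : ℂ) * t)) / h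
      = ((-(1 - Real.exp (-x)) / h : ℝ) : ℂ) * (lam * (a - t)) := by
      push_cast; ring
    rw [this, Complex.re_ofReal_mul]
    congr 1; ring
  have hkn : ∀ t : ℂ, ∀ x : ℝ,
      ‖Complex.exp (lam * (t - (a * (1 - (Real.exp (-x) : ℝ)) + ((Real.exp (-x) : ℝ) : ℂ) * t)) / h)
        * (a * (Real.exp (-x) : ℝ) + (-(Real.exp (-x) : ℝ) : ℂ) * t) * (-1 / h)‖
        = ‖(a:ℂ) - t‖ / h * (Real.exp (-x) * Real.exp (-((lam * (a - t)).re / h) * (1 - Real.exp (-x)))) := by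
    intro t x
    rw [norm_mul, norm_mul, hnorm]
    have e1 : ‖(-1 / h : ℂ)‖ = 1 / h := by
      rw [norm_div]; simp [abs_of_pos hh]
    have e2 : (a * (Real.exp (-x) : ℝ) + (-(Real.exp (-x) : ℝ) : ℂ) * t)
      = ((Real.exp (-x) : ℝ) : ℂ) * (a - t) := by ring
    rw [e1, e2, norm_mul, Complex.norm_real, Real.norm_eq_abs, Real.abs_exp]
    ring
  have hexpd : ∀ x : ℝ, HasDerivAt (fun x : ℝ => Real.exp (-x)) (-Real.exp (-x)) x := by
    intro x
    simpa using (hasDerivAt_neg x).exp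
  refine kernel_solver (Sector κ a) (isOpen_sector κ a) lam h (2 / c) hh
    (fun x => a * (1 - (Real.exp (-x) : ℝ)))
    (fun x => a * (Real.exp (-x) : ℝ)) (fun x => (Real.exp (-x) : ℝ)) (fun x => -(Real.exp (-x) : ℝ))
    ?_ ?_ (by fun_prop) (by fun_prop) (by simp) (by simp) ?_ _ rfl
    ?_ ?_ ?_
  · intro x
    refine (((hexpd x).ofReal_comp.const_sub 1).const_mul (a:ℂ)).congr_deriv ?_
    push_cast; ring
  · intro x
    refine (hexpd x).ofReal_comp.congr_deriv ?_
    push_cast; ring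
  · intro x hx t ht
    have h0 := Real.exp_pos (-x)
    simp only [Sector, mem_ofPred_eq] at ht ⊢
    have e1 : (a * (1 - (Real.exp (-x) : ℝ)) + ((Real.exp (-x) : ℝ) : ℂ) * t).im = Real.exp (-x) * t.im := by
      rw [Complex.add_im, Complex.im_ofReal_mul, Complex.im_ofReal_mul]
      simp [-Complex.ofReal_exp]
    have e2 : (a * (1 - (Real.exp (-x) : ℝ)) + ((Real.exp (-x) : ℝ) : ℂ) * t).re
        = a * (1 - Real.exp (-x)) + Real.exp (-x) * t.re := by
      rw [Complex.add_re, Complex.re_ofReal_mul, Complex.re_ofReal_mul]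
      simp [-Complex.ofReal_exp]
    rw [e1, e2, abs_mul, abs_of_pos h0]
    nlinarith
  · intro t ht
    obtain ⟨ε, hε, hball⟩ := Metric.isOpen_iff.1 (isOpen_sector κ a) t ht
    refine ⟨ε, hε, fun x => (‖(a:ℂ) - t‖ + ε) / h * Real.exp (-x), ?_, ?_⟩
    · exact (integrableOn_exp_neg_Ioi 0).const_mul _
    · intro s hs x hx
      obtain ⟨h0, h1, h2⟩ := hw s (hball hs)
      rw [hkn]
      have hle : Real.exp (-((lam * (a - s)).re / h) * (1 - Real.exp (-x))) ≤ 1 := by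
        rw [Real.exp_le_one_iff, neg_mul, neg_nonpos]
        have : 0 ≤ (lam * (a - s)).re := le_trans (by positivity) h1
        have := hex x hx.le
        positivity
      have h3 : ‖(a:ℂ) - s‖ ≤ ‖(a:ℂ) - t‖ + ε := by
        rw [Metric.mem_ball, dist_eq_norm] at hs
        calc ‖(a:ℂ) - s‖ = ‖(a - t) - (s - t)‖ := by congr 1; ring
          _ ≤ ‖(a:ℂ) - t‖ + ‖s - t‖ := norm_sub_le _ _
          _ ≤ _ := by linarith
      have h4 : Real.exp (-x) * Real.exp (-((lam * (a - s)).re / h) * (1 - Real.exp (-x))) ≤ Real.exp (-x) :=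
        mul_le_of_le_one_right (Real.exp_pos _).le hle
      exact mul_le_mul (div_le_div_of_nonneg_right h3 hh.le) h4 (by positivity) (by positivity)
  · intro t ht
    obtain ⟨h0, h1, h2⟩ := hw t ht
    have : Tendsto (fun x : ℝ => Real.exp (-x)) atTop (𝓝 0) :=
      Real.tendsto_exp_atBot.comp tendsto_neg_atTop_atBot
    refine squeeze_zero_norm' ?_ this
    filter_upwards [eventually_ge_atTop 0] with x hx
    rw [norm_mul, hnorm, Complex.norm_real, Real.norm_eq_abs, Real.abs_exp]
    apply mul_le_of_le_one_left (Real.exp_pos _).le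
    rw [Real.exp_le_one_iff, neg_mul, neg_nonpos]
    have : 0 ≤ (lam * (a - t)).re := le_trans (by positivity) h1
    have := hex x hx
    positivity
  · intro t ht
    obtain ⟨h0, h1, h2⟩ := hw t ht
    set L := (lam * (a - t)).re / h with hL
    have hre : 0 < (lam * (a - t)).re := lt_of_lt_of_le (by positivity) h1
    have hL0 : 0 < L := by positivity
    have hd : ∀ x ∈ Ici (0:ℝ), HasDerivAt (fun x => - (1 / L) * Real.exp (-L * (1 - Real.exp (-x))))
        (Real.exp (-x) * Real.exp (-L * (1 - Real.exp (-x)))) x := by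
      intro x _
      refine (((((hexpd x).const_sub 1).const_mul (-L)).exp).const_mul (-(1/L))).congr_deriv ?_
      field_simp
    have ht : Tendsto (fun x => - (1 / L) * Real.exp (-L * (1 - Real.exp (-x)))) atTop
        (𝓝 (- (1 / L) * Real.exp (-L * (1 - 0)))) := by
      have : Tendsto (fun x : ℝ => Real.exp (-x)) atTop (𝓝 0) :=
        Real.tendsto_exp_atBot.comp tendsto_neg_atTop_atBot
      exact ((Real.continuous_exp.tendsto _).comp ((this.const_sub 1).const_mul (-L))).const_mul _
    have hpos : ∀ x ∈ Ioi (0:ℝ), 0 ≤ Real.exp (-x) * Real.exp (-L * (1 - Real.exp (-x))) :=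
      fun x _ => by positivity
    have hi := integrableOn_Ioi_deriv_of_nonneg' hd hpos ht
    refine ⟨_, hi.const_mul (‖(a:ℂ) - t‖ / h), fun x hx => (hkn t x).le, ?_⟩
    rw [integral_const_mul, integral_Ioi_of_hasDerivAt_of_nonneg' hd hpos ht]
    have e : - (1 / L) * Real.exp (-L * (1 - 0)) - - (1 / L) * Real.exp (-L * (1 - Real.exp (-0))) ≤ 1 / L := by
      have : 0 ≤ 1 / L * Real.exp (-L * (1 - 0)) := by positivity
      simp at this ⊢
      linarith
    calc _ ≤ ‖(a:ℂ) - t‖ / h * (1 / L) := by gcongr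
      _ = ‖(a:ℂ) - t‖ / (lam * (a - t)).re := by rw [hL]; field_simp
      _ ≤ 2 * (a - t.re) / (c * (a - t.re)) := by gcongr
      _ = 2 / c := by field_simp

lemma solver_exists (κ a c h : ℝ) (hκ : 0 < κ) (hκ1 : κ ≤ 1 / 2) (hc : 0 < c) (hh : 0 < h) (lam : ℂ)
    (hl1 : c ≤ |lam.re - κ * lam.im|) (hl2 : c ≤ |lam.re + κ * lam.im|) :
    ∃ J, IsSolver (Sector κ a) lam h (2 / c) J := by
  have hn : ∀ y : ℝ, |y| ≤ 1/2 → ‖(⟨1, y⟩ : ℂ)‖ ≤ 2 := by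
    intro y hy
    refine (Complex.norm_le_abs_re_add_abs_im _).trans ?_
    simp; linarith
  rcases le_abs.1 hl1 with h1 | h1
  · rcases le_abs.1 hl2 with h2 | h2
    · exact solver_unstable κ a c h hκ hκ1 hc hh lam h1 h2
    · refine solver_stable κ a c h hκ.le hc hh lam ⟨1, -κ⟩ rfl (by simp [abs_of_pos hκ])
        (hn _ (by simpa [abs_of_pos hκ] using hκ1)) ?_
      simp; linarith
  · refine solver_stable κ a c h hκ.le hc hh lam ⟨1, κ⟩ rfl (by simp [abs_of_pos hκ])
        (hn _ (by simpa [abs_of_pos hκ] using hκ1)) ?_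
    simp; linarith

/-- Pigeonhole choice of the opening of the sector. -/
lemma exists_opening {ι : Type} [Fintype ι] (δ s : ℝ) (hδ : 0 < δ)
    (hs : s = 1 / (2 * (2 * Fintype.card ι + 1))) (lam : ι → ℂ) (hlam : ∀ i, δ ≤ ‖lam i‖) :
    ∃ κ, s ≤ κ ∧ κ ≤ 1 / 2 ∧ ∀ i, δ * s / 8 ≤ |(lam i).re - κ * (lam i).im| ∧
      δ * s / 8 ≤ |(lam i).re + κ * (lam i).im| := by
  classical
  set N := Fintype.card ι with hN
  have hs0 : 0 < s := by rw [hs]; positivity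
  have hsN : s * (2 * N + 1) = 1 / 2 := by rw [hs]; field_simp
  have hsle : s ≤ 1 / 2 := by
    have : 0 ≤ s * (2 * N) := by positivity
    linarith
  by_contra! hcon
  have hbad : ∀ k : Fin (2 * N + 1), ∃ q : ι × Bool,
      |(lam q.1).re + (if q.2 then 1 else -1) * (s * ((k:ℕ) + 1)) * (lam q.1).im| < δ * s / 8 := by
    intro k
    have hk : ((k:ℕ):ℝ) + 1 ≤ 2 * N + 1 := by
      have := k.2
      exact_mod_cast this
    obtain ⟨i, hi⟩ := hcon (s * ((k:ℕ) + 1)) (by nlinarith [(Nat.cast_nonneg (k:ℕ) : (0:ℝ) ≤ (k:ℕ))])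
      (by nlinarith)
    by_cases h1 : δ * s / 8 ≤ |(lam i).re - s * ((k:ℕ) + 1) * (lam i).im|
    · exact ⟨(i, true), by simpa using hi h1⟩
    · refine ⟨(i, false), ?_⟩
      push Not at h1
      simpa [sub_eq_add_neg] using h1
  choose q hq using hbad
  obtain ⟨k, l, hkl, hqe⟩ := Fintype.exists_ne_map_eq_of_card_lt q (by simp; omega)
  have h1 := hq k
  have h2 := hq l
  rw [← hqe] at h2
  set x := (lam (q k).1).re
  set y := (lam (q k).1).im
  have hk : ((k:ℕ):ℝ) + 1 ≤ 2 * N + 1 := by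
    have := k.2
    exact_mod_cast this
  have hk0 : (0:ℝ) ≤ (k:ℕ) := Nat.cast_nonneg _
  have hκ2 : s * ((k:ℕ) + 1) ≤ 1/2 := by nlinarith
  have hκ0 : 0 ≤ s * ((k:ℕ) + 1) := by positivity
  have hxy : δ ≤ |x| + |y| := (hlam _).trans (Complex.norm_le_abs_re_add_abs_im _)
  have hsg : |(if (q k).2 then (1:ℝ) else -1)| = 1 := by split_ifs <;> simp
  -- the imaginary part is not small
  have hy : δ / 2 ≤ |y| := by
    have t1 : |x| ≤ |x + (if (q k).2 then 1 else -1) * (s * ((k:ℕ) + 1)) * y|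
        + |(if (q k).2 then 1 else -1) * (s * ((k:ℕ) + 1)) * y| := by
      have := abs_sub (x + (if (q k).2 then 1 else -1) * (s * ((k:ℕ) + 1)) * y)
        ((if (q k).2 then 1 else -1) * (s * ((k:ℕ) + 1)) * y)
      simpa using this
    rw [abs_mul _ y, abs_mul, hsg, one_mul, abs_of_nonneg hκ0] at t1
    have : s * ((k:ℕ) + 1) * |y| ≤ 1 / 2 * |y| := by gcongr
    nlinarith
  have hd : |(if (q k).2 then (1:ℝ) else -1) * (s * (((k:ℕ):ℝ) - (l:ℕ))) * y| < δ * s / 4 := by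
    have e : (if (q k).2 then (1:ℝ) else -1) * (s * (((k:ℕ):ℝ) - (l:ℕ))) * y
      = (x + (if (q k).2 then 1 else -1) * (s * ((k:ℕ) + 1)) * y)
        - (x + (if (q k).2 then 1 else -1) * (s * ((l:ℕ) + 1)) * y) := by ring
    rw [e]
    refine (abs_sub _ _).trans_lt ?_
    linarith
  rw [abs_mul, abs_mul, hsg, one_mul, abs_mul, abs_of_pos hs0] at hd
  have hkl' : (1:ℝ) ≤ |((k:ℕ):ℝ) - (l:ℕ)| := by
    have : ((k:ℕ):ℤ) - (l:ℕ) ≠ 0 := by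
      intro h; apply hkl; ext; omega
    have := Int.one_le_abs this
    exact_mod_cast this
  have : s * 1 * (δ / 2) ≤ s * |((k:ℕ):ℝ) - (l:ℕ)| * |y| := by gcongr
  nlinarith



section MatrixHelpers

variable {l m n : Type} [Fintype l] [Fintype m] [Fintype n]

lemma entry_le (X : Matrix m n ℂ) (i : m) (j : n) : ‖X i j‖ ≤ ‖X‖ := by
  rw [Matrix.linfty_opNorm_def]
  have h1 : ‖X i j‖₊ ≤ ∑ j, ‖X i j‖₊ :=
    Finset.single_le_sum (f := fun j => ‖X i j‖₊) (fun _ _ => zero_le) (Finset.mem_univ j)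
  have h2 : (∑ j, ‖X i j‖₊) ≤ Finset.univ.sup fun i => ∑ j, ‖X i j‖₊ :=
    Finset.le_sup (f := fun i => ∑ j, ‖X i j‖₊) (Finset.mem_univ i)
  exact_mod_cast h1.trans h2

lemma norm_le_of_entry (X : Matrix m n ℂ) (D : ℝ) (hD : 0 ≤ D) (h : ∀ i j, ‖X i j‖ ≤ D) :
    ‖X‖ ≤ Fintype.card n * D := by
  rw [Matrix.linfty_opNorm_def]
  lift D to NNReal using hD
  have : (Finset.univ.sup fun i => ∑ j, ‖X i j‖₊) ≤ Fintype.card n * D := by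
    apply Finset.sup_le
    intro i _
    calc ∑ j, ‖X i j‖₊ ≤ ∑ j : n, D := Finset.sum_le_sum fun j _ => h i j
      _ = _ := by simp
  exact_mod_cast this

/-- Taking an entry, as a continuous linear map. -/
noncomputable def entryCLM (i : m) (j : n) : Matrix m n ℂ →L[ℂ] ℂ :=
  LinearMap.mkContinuous
    { toFun := fun X => X i j, map_add' := fun _ _ => rfl, map_smul' := fun _ _ => rfl } 1
    (fun X => by rw [one_mul]; exact entry_le X i j)

lemma hasDerivAt_entry {f : ℂ → Matrix m n ℂ} {f' : Matrix m n ℂ} {t : ℂ} (h : HasDerivAt f f' t)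
    (i : m) (j : n) : HasDerivAt (fun s => f s i j) (f' i j) t :=
  ((entryCLM i j).hasFDerivAt (x := f t)).comp_hasDerivAt t h

lemma hasDerivAt_of_entry {f : ℂ → Matrix m n ℂ} {f' : Matrix m n ℂ} {t : ℂ}
    (h : ∀ i j, HasDerivAt (fun s => f s i j) (f' i j) t) : HasDerivAt f f' t := by
  classical
  have e : ∀ X : Matrix m n ℂ, X = ∑ i, ∑ j, X i j • Matrix.single i j (1:ℂ) := by
    intro X
    conv_lhs => rw [Matrix.matrix_eq_sum_single X]
    simp
  have e1 : f = fun s => ∑ i, ∑ j, f s i j • Matrix.single i j (1:ℂ) := funext fun s => e (f s)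
  rw [e1, e f']
  apply HasDerivAt.fun_sum
  intro i _
  apply HasDerivAt.fun_sum
  intro j _
  exact (h i j).smul_const _

lemma hasDerivAt_matmul {f : ℂ → Matrix l m ℂ} {g : ℂ → Matrix m n ℂ} {f' : Matrix l m ℂ}
    {g' : Matrix m n ℂ} {t : ℂ} (hf : HasDerivAt f f' t) (hg : HasDerivAt g g' t) :
    HasDerivAt (fun s => f s * g s) (f' * g t + f t * g') t := by
  apply hasDerivAt_of_entry
  intro i j
  simp only [Matrix.mul_apply, Matrix.add_apply, ← Finset.sum_add_distrib]
  apply HasDerivAt.fun_sum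
  intro q _
  exact (hasDerivAt_entry hf i q).mul (hasDerivAt_entry hg q j)

lemma differentiableOn_matmul {f : ℂ → Matrix l m ℂ} {g : ℂ → Matrix m n ℂ} {U : Set ℂ}
    (hU : IsOpen U) (hf : DifferentiableOn ℂ f U) (hg : DifferentiableOn ℂ g U) :
    DifferentiableOn ℂ (fun s => f s * g s) U := fun t ht =>
  (hasDerivAt_matmul (hf.differentiableAt (hU.mem_nhds ht)).hasDerivAt
    (hg.differentiableAt (hU.mem_nhds ht)).hasDerivAt).differentiableAt.differentiableWithinAt

lemma differentiableOn_entry {f : ℂ → Matrix m n ℂ} {U : Set ℂ} (hU : IsOpen U)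
    (hf : DifferentiableOn ℂ f U) (i : m) (j : n) : DifferentiableOn ℂ (fun s => f s i j) U :=
  fun t ht => (hasDerivAt_entry (hf.differentiableAt (hU.mem_nhds ht)).hasDerivAt
    i j).differentiableAt.differentiableWithinAt

end MatrixHelpers

/-- Fixed points for contractions of function classes. -/
lemma fixed_point {S E : Type} [NormedAddCommGroup E] [CompleteSpace E] (U : Set S)
    (𝒞 : (S → E) → Prop)
    (hcl : ∀ (u : ℕ → S → E) (f : S → E), (∀ k, 𝒞 (u k)) → TendstoUniformlyOn u f atTop U → 𝒞 f)
    (h0 : 𝒞 (fun _ => 0)) (B : ℝ) (hB : 0 ≤ B) (Φ : (S → E) → S → E)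
    (hmap : ∀ f, 𝒞 f → (∀ s ∈ U, ‖f s‖ ≤ B) → 𝒞 (Φ f) ∧ ∀ s ∈ U, ‖Φ f s‖ ≤ B)
    (hlip : ∀ f g, 𝒞 f → 𝒞 g → (∀ s ∈ U, ‖f s‖ ≤ B) → (∀ s ∈ U, ‖g s‖ ≤ B) →
      ∀ D, (∀ s ∈ U, ‖f s - g s‖ ≤ D) → ∀ s ∈ U, ‖Φ f s - Φ g s‖ ≤ D / 2) :
    ∃ f, 𝒞 f ∧ (∀ s ∈ U, ‖f s‖ ≤ B) ∧ ∀ s ∈ U, Φ f s = f s := by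
  classical
  set u : ℕ → S → E := fun k => Φ^[k] (fun _ => 0) with hu
  have hus : ∀ k, u (k+1) = Φ (u k) := fun k => Function.iterate_succ_apply' _ _ _
  have hC : ∀ k, 𝒞 (u k) ∧ ∀ s ∈ U, ‖u k s‖ ≤ B := by
    intro k
    induction k with
    | zero => exact ⟨h0, fun s _ => by simpa [hu] using hB⟩
    | succ k ih => rw [hus]; exact hmap _ ih.1 ih.2
  have hd : ∀ k, ∀ s ∈ U, ‖u (k+1) s - u k s‖ ≤ B / 2 ^ k := by
    intro k
    induction k with
    | zero => intro s hs; simpa [hu] using (hC 1).2 s hs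
    | succ k ih =>
      intro s hs
      have := hlip _ _ (hC (k+1)).1 (hC k).1 (hC (k+1)).2 (hC k).2 _ ih s hs
      rw [← hus, ← hus] at this
      refine this.trans (le_of_eq ?_)
      rw [pow_succ]; field_simp
  have hd' : ∀ s ∈ U, ∀ k, dist (u k s) (u (k+1) s) ≤ 2 * B / 2 / 2 ^ k := by
    intro s hs k
    rw [dist_comm, dist_eq_norm]
    refine (hd k s hs).trans (le_of_eq ?_)
    ring
  have hlim : ∀ s, ∃ y, s ∈ U → Tendsto (fun k => u k s) atTop (𝓝 y) := by
    intro s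
    by_cases hs : s ∈ U
    · obtain ⟨y, hy⟩ := cauchySeq_tendsto_of_complete (cauchySeq_of_le_geometric_two (hd' s hs))
      exact ⟨y, fun _ => hy⟩
    · exact ⟨0, fun h => absurd h hs⟩
  choose f hf using hlim
  have hrate : ∀ k, ∀ s ∈ U, ‖u k s - f s‖ ≤ 2 * B / 2 ^ k := by
    intro k s hs
    rw [← dist_eq_norm]
    exact dist_le_of_le_geometric_two_of_tendsto (hd' s hs) (hf s hs) k
  have hgeo : Tendsto (fun k : ℕ => 2 * B / 2 ^ k) atTop (𝓝 0) := by
    have := (tendsto_pow_atTop_nhds_zero_of_lt_one (r := (1/2:ℝ)) (by norm_num) (by norm_num)).const_mul (2*B)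
    simpa [div_eq_mul_inv] using this
  have hunif : TendstoUniformlyOn u f atTop U := by
    rw [Metric.tendstoUniformlyOn_iff]
    intro ε hε
    filter_upwards [hgeo.eventually_lt_const hε] with k hk s hs
    rw [dist_comm, dist_eq_norm]
    exact (hrate k s hs).trans_lt hk
  have hfC : 𝒞 f := hcl u f (fun k => (hC k).1) hunif
  have hfB : ∀ s ∈ U, ‖f s‖ ≤ B := fun s hs =>
    le_of_tendsto (hf s hs).norm (Eventually.of_forall fun k => (hC k).2 s hs)
  refine ⟨f, hfC, hfB, fun s hs => ?_⟩
  have h1 : Tendsto (fun k => u (k+1) s) atTop (𝓝 (Φ f s)) := by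
    rw [tendsto_iff_norm_sub_tendsto_zero]
    refine squeeze_zero (fun _ => norm_nonneg _) (fun k => ?_) (by simpa using hgeo.div_const 2)
    rw [hus]
    exact hlip _ _ (hC k).1 hfC (hC k).2 hfB _ (hrate k) s hs
  exact tendsto_nhds_unique h1 ((tendsto_add_atTop_iff_nat 1).2 (hf s hs))

section Riccati

variable {m n : Type} [Fintype m] [Fintype n]

lemma riccati_lip (E : Matrix m m ℂ) (F : Matrix n n ℂ) (R : Matrix n m ℂ) (S X Y : Matrix m n ℂ)
    (e r B : ℝ) (hE : ‖E‖ ≤ e) (hF : ‖F‖ ≤ e) (hR : ‖R‖ ≤ r) (hX : ‖X‖ ≤ B) (hY : ‖Y‖ ≤ B) :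
    ‖(E * X - X * F + S - X * R * X) - (E * Y - Y * F + S - Y * R * Y)‖
      ≤ (2 * e + 2 * r * B) * ‖X - Y‖ := by
  have hr : 0 ≤ r := (norm_nonneg _).trans hR
  have hB : 0 ≤ B := (norm_nonneg _).trans hX
  have e1 : (E * X - X * F + S - X * R * X) - (E * Y - Y * F + S - Y * R * Y)
      = E * (X - Y) - (X - Y) * F - ((X - Y) * (R * X) + Y * R * (X - Y)) := by
    simp only [Matrix.mul_sub, Matrix.sub_mul, Matrix.mul_assoc]; abel
  rw [e1]
  have t1 : ‖E * (X - Y)‖ ≤ e * ‖X - Y‖ :=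
    (Matrix.linfty_opNorm_mul _ _).trans (by gcongr)
  have t2 : ‖(X - Y) * F‖ ≤ ‖X - Y‖ * e :=
    (Matrix.linfty_opNorm_mul _ _).trans (by gcongr)
  have t3 : ‖(X - Y) * (R * X)‖ ≤ ‖X - Y‖ * (r * B) :=
    (Matrix.linfty_opNorm_mul _ _).trans (by
      gcongr
      exact (Matrix.linfty_opNorm_mul _ _).trans (by gcongr))
  have t4 : ‖Y * R * (X - Y)‖ ≤ (B * r) * ‖X - Y‖ :=
    (Matrix.linfty_opNorm_mul _ _).trans (by
      gcongr
      exact (Matrix.linfty_opNorm_mul _ _).trans (by gcongr))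
  have := norm_sub_le (E * (X - Y) - (X - Y) * F) ((X - Y) * (R * X) + Y * R * (X - Y))
  have := norm_sub_le (E * (X - Y)) ((X - Y) * F)
  have := norm_add_le ((X - Y) * (R * X)) (Y * R * (X - Y))
  nlinarith

lemma riccati_fixed (U : Set ℂ) (𝒞 : (ℂ → Matrix m n ℂ) → Prop)
    (hcl : ∀ (u : ℕ → ℂ → Matrix m n ℂ) (f : ℂ → Matrix m n ℂ), (∀ k, 𝒞 (u k)) →
      TendstoUniformlyOn u f atTop U → 𝒞 f)
    (h0 : 𝒞 (fun _ => 0)) (J : (ℂ → Matrix m n ℂ) → ℂ → Matrix m n ℂ) (K : ℝ) (hK : 0 ≤ K)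
    (hJC : ∀ g, 𝒞 g → (∃ M, ∀ s ∈ U, ‖g s‖ ≤ M) → 𝒞 (J g))
    (hJl : ∀ g₁ g₂, 𝒞 g₁ → 𝒞 g₂ → (∃ M, ∀ s ∈ U, ‖g₁ s‖ ≤ M) → (∃ M, ∀ s ∈ U, ‖g₂ s‖ ≤ M) →
      ∀ D, (∀ s ∈ U, ‖g₁ s - g₂ s‖ ≤ D) → ∀ t ∈ U, ‖J g₁ t - J g₂ t‖ ≤ K * D)
    (hJ0 : ∀ t ∈ U, J (fun _ => 0) t = 0)
    (E : ℂ → Matrix m m ℂ) (F : ℂ → Matrix n n ℂ) (R : ℂ → Matrix n m ℂ) (S : ℂ → Matrix m n ℂ)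
    (e r M : ℝ) (hM0 : 0 ≤ M) (hE : ∀ s ∈ U, ‖E s‖ ≤ e) (hF : ∀ s ∈ U, ‖F s‖ ≤ e)
    (hR : ∀ s ∈ U, ‖R s‖ ≤ r) (hS : ∀ s ∈ U, ‖S s‖ ≤ M)
    (hN : ∀ Y, 𝒞 Y → 𝒞 (fun t => E t * Y t - Y t * F t + S t - Y t * R t * Y t))
    (hsmall : K * (2 * e + 2 * r * (2 * K * M)) ≤ 1 / 2) :
    ∃ Y, 𝒞 Y ∧ (∀ s ∈ U, ‖Y s‖ ≤ 2 * K * M) ∧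
      (∀ s ∈ U, J (fun t => E t * Y t - Y t * F t + S t - Y t * R t * Y t) s = Y s) ∧
      ∃ M', ∀ s ∈ U, ‖E s * Y s - Y s * F s + S s - Y s * R s * Y s‖ ≤ M' := by
  set B := 2 * K * M with hBdef
  have hB : 0 ≤ B := by positivity
  set N : (ℂ → Matrix m n ℂ) → ℂ → Matrix m n ℂ :=
    fun Y t => E t * Y t - Y t * F t + S t - Y t * R t * Y t with hNdef
  have hlipN : ∀ X Y : ℂ → Matrix m n ℂ, (∀ s ∈ U, ‖X s‖ ≤ B) → (∀ s ∈ U, ‖Y s‖ ≤ B) →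
      ∀ s ∈ U, ‖N X s - N Y s‖ ≤ (2 * e + 2 * r * B) * ‖X s - Y s‖ := fun X Y hX hY s hs =>
    riccati_lip _ _ _ _ _ _ e r B (hE s hs) (hF s hs) (hR s hs) (hX s hs) (hY s hs)
  have hq : ∀ s ∈ U, 0 ≤ 2 * e + 2 * r * B := fun s hs => by
    have h1 := (norm_nonneg _).trans (hE s hs)
    have h2 := (norm_nonneg _).trans (hR s hs)
    positivity
  have hNbd : ∀ Y : ℂ → Matrix m n ℂ, (∀ s ∈ U, ‖Y s‖ ≤ B) →
      ∀ s ∈ U, ‖N Y s‖ ≤ (2 * e + 2 * r * B) * B + M := by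
    intro Y hY s hs
    have h1 := hlipN Y (fun _ => 0) hY (fun _ _ => by simpa using hB) s hs
    have h2 : N (fun _ => 0) s = S s := by simp [hNdef]
    rw [h2, sub_zero] at h1
    have h3 : ‖N Y s‖ ≤ ‖N Y s - S s‖ + ‖S s‖ := by
      simpa using norm_add_le (N Y s - S s) (S s)
    have h4 := mul_le_mul_of_nonneg_left (hY s hs) (hq s hs)
    linarith [hS s hs]
  have hJN : ∀ Y, 𝒞 Y → (∀ s ∈ U, ‖Y s‖ ≤ B) → ∀ s ∈ U, ‖J (N Y) s‖ ≤ B := by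
    intro Y hYC hY s hs
    have h1 := hJl (N Y) (fun _ => 0) (hN Y hYC) h0 ⟨_, hNbd Y hY⟩ ⟨0, by simp⟩
      ((2 * e + 2 * r * B) * B + M) (fun s hs => by simpa using hNbd Y hY s hs) s hs
    rw [hJ0 s hs, sub_zero] at h1
    have : K * (2 * e + 2 * r * B) * B ≤ 1 / 2 * B := by gcongr
    nlinarith
  obtain ⟨Y, hYC, hYB, hYf⟩ := fixed_point U 𝒞 hcl h0 B hB (fun Y => J (N Y))
    (fun Y hYC hY => ⟨hJC _ (hN Y hYC) ⟨_, hNbd Y hY⟩, hJN Y hYC hY⟩)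
    (fun X Y hXC hYC hX hY D hD s hs => by
      have hD0 : 0 ≤ D := (norm_nonneg _).trans (hD s hs)
      have h1 := hJl (N X) (N Y) (hN X hXC) (hN Y hYC) ⟨_, hNbd X hX⟩ ⟨_, hNbd Y hY⟩
        ((2 * e + 2 * r * B) * D) (fun s hs => (hlipN X Y hX hY s hs).trans
          (mul_le_mul_of_nonneg_left (hD s hs) (hq s hs))) s hs
      have : K * (2 * e + 2 * r * B) * D ≤ 1 / 2 * D := by gcongr
      nlinarith)
  exact ⟨Y, hYC, hYB, hYf, _, hNbd Y hYB⟩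

end Riccati




section Riccati2

variable {m n : Type} [Fintype m] [Fintype n] [DecidableEq m] [DecidableEq n]

lemma diag_entry (μ : m → ℂ) (ν : n → ℂ) (X : Matrix m n ℂ) (i : m) (j : n) :
    (Matrix.diagonal μ * X - X * Matrix.diagonal ν) i j = (μ i - ν j) * X i j := by
  simp [Matrix.diagonal_mul, Matrix.mul_diagonal]; ring

lemma riccati_sector (κ a c h : ℝ) (hκ : 0 < κ) (hκ1 : κ ≤ 1 / 2) (hc : 0 < c) (hh : 0 < h)
    (μ : m → ℂ) (ν : n → ℂ)
    (hl : ∀ i j, c ≤ |(μ i - ν j).re - κ * (μ i - ν j).im| ∧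
      c ≤ |(μ i - ν j).re + κ * (μ i - ν j).im|)
    (E : ℂ → Matrix m m ℂ) (F : ℂ → Matrix n n ℂ) (R : ℂ → Matrix n m ℂ) (S : ℂ → Matrix m n ℂ)
    (dE : DifferentiableOn ℂ E (Sector κ a)) (dF : DifferentiableOn ℂ F (Sector κ a))
    (dR : DifferentiableOn ℂ R (Sector κ a)) (dS : DifferentiableOn ℂ S (Sector κ a))
    (e r M K : ℝ) (hK : K = Fintype.card n * (2 / c)) (hM0 : 0 ≤ M)
    (hE : ∀ s ∈ Sector κ a, ‖E s‖ ≤ e) (hF : ∀ s ∈ Sector κ a, ‖F s‖ ≤ e)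
    (hR : ∀ s ∈ Sector κ a, ‖R s‖ ≤ r) (hS : ∀ s ∈ Sector κ a, ‖S s‖ ≤ M)
    (hsmall : K * (2 * e + 2 * r * (2 * K * M)) ≤ 1 / 2) :
    ∃ Y : ℂ → Matrix m n ℂ, ∀ t ∈ Sector κ a, ‖Y t‖ ≤ 2 * K * M ∧
      HasDerivAt Y ((h : ℂ)⁻¹ • (Matrix.diagonal μ * Y t - Y t * Matrix.diagonal ν +
        (E t * Y t - Y t * F t + S t - Y t * R t * Y t))) t := by
  have hU := isOpen_sector κ a
  have hK0 : 0 ≤ K := by rw [hK]; positivity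
  have hex : ∀ i j, ∃ J, IsSolver (Sector κ a) (μ i - ν j) h (2 / c) J := fun i j =>
    solver_exists κ a c h hκ hκ1 hc hh _ (hl i j).1 (hl i j).2
  choose J hJ using hex
  have hbd : ∀ g : ℂ → Matrix m n ℂ, (∃ M, ∀ s ∈ Sector κ a, ‖g s‖ ≤ M) → ∀ i j,
      ∃ M, ∀ s ∈ Sector κ a, ‖g s i j‖ ≤ M := by
    rintro g ⟨M, hM⟩ i j
    exact ⟨M, fun s hs => (entry_le _ _ _).trans (hM s hs)⟩
  have hder : ∀ g : ℂ → Matrix m n ℂ, DifferentiableOn ℂ g (Sector κ a) →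
      (∃ M, ∀ s ∈ Sector κ a, ‖g s‖ ≤ M) → ∀ t ∈ Sector κ a,
      HasDerivAt (fun t => Matrix.of fun i j => J i j (fun s => g s i j) t)
        ((h : ℂ)⁻¹ • (Matrix.diagonal μ * (Matrix.of fun i j => J i j (fun s => g s i j) t)
          - (Matrix.of fun i j => J i j (fun s => g s i j) t) * Matrix.diagonal ν + g t)) t := by
    intro g hg hM t ht
    apply hasDerivAt_of_entry
    intro i j
    have := (hJ i j).1 (fun s => g s i j) (differentiableOn_entry hU hg i j) (hbd g hM i j) t ht
    refine this.congr_deriv ?_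
    rw [Matrix.smul_apply, Matrix.add_apply, diag_entry, Matrix.of_apply, smul_eq_mul]
    ring
  obtain ⟨Y, hYC, hYB, hYf, hYN⟩ := riccati_fixed (Sector κ a)
    (fun g : ℂ → Matrix m n ℂ => DifferentiableOn ℂ g (Sector κ a))
    (fun u f hu huf => huf.tendstoLocallyUniformlyOn.differentiableOn (Eventually.of_forall hu) hU)
    (differentiableOn_const _)
    (fun g t => Matrix.of fun i j => J i j (fun s => g s i j) t) K hK0
    (fun g hg hM t ht => (hder g hg hM t ht).differentiableAt.differentiableWithinAt)
    (by
      intro g₁ g₂ h1 h2 hM1 hM2 D hD t ht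
      have hD0 : 0 ≤ D := (norm_nonneg _).trans (hD t ht)
      have := norm_le_of_entry ((Matrix.of fun i j => J i j (fun s => g₁ s i j) t)
        - (Matrix.of fun i j => J i j (fun s => g₂ s i j) t)) (2 / c * D) (by positivity) (by
          intro i j
          exact (hJ i j).2.1 _ _ (differentiableOn_entry hU h1 i j) (differentiableOn_entry hU h2 i j)
            (hbd _ hM1 i j) (hbd _ hM2 i j) D (fun s hs => (entry_le (g₁ s - g₂ s) i j).trans (hD s hs)) t ht)
      rw [hK, mul_assoc]; exact this)
    (by
      intro t ht
      ext i j
      exact (hJ i j).2.2 t ht)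
    E F R S e r M hM0 hE hF hR hS
    (fun Y hY => (((differentiableOn_matmul hU dE hY).sub (differentiableOn_matmul hU hY dF)).add dS).sub
      (differentiableOn_matmul hU (differentiableOn_matmul hU hY dR) hY)) hsmall
  refine ⟨Y, fun t ht => ⟨hYB t ht, ?_⟩⟩
  have hNC : DifferentiableOn ℂ (fun t => E t * Y t - Y t * F t + S t - Y t * R t * Y t) (Sector κ a) :=
    (((differentiableOn_matmul hU dE hYC).sub (differentiableOn_matmul hU hYC dF)).add dS).sub
      (differentiableOn_matmul hU (differentiableOn_matmul hU hYC dR) hYC)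
  have h1 := hder _ hNC hYN t ht
  have h2 := hYf t ht
  simp only at h2
  rw [h2] at h1
  refine h1.congr_of_eventuallyEq ?_
  filter_upwards [hU.mem_nhds ht] with s hs
  exact (hYf s hs).symm

lemma riccati_algebraic (δ : ℝ) (hδ : 0 < δ)
    (μ : m → ℂ) (ν : n → ℂ) (hl : ∀ i j, δ ≤ ‖μ i - ν j‖)
    (E : Matrix m m ℂ) (F : Matrix n n ℂ) (R : Matrix n m ℂ) (S : Matrix m n ℂ)
    (e r M K : ℝ) (hK : Fintype.card n * (1 / δ) ≤ K) (hM0 : 0 ≤ M)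
    (hE : ‖E‖ ≤ e) (hF : ‖F‖ ≤ e) (hR : ‖R‖ ≤ r) (hS : ‖S‖ ≤ M)
    (hsmall : K * (2 * e + 2 * r * (2 * K * M)) ≤ 1 / 2) :
    ∃ Y : Matrix m n ℂ, ‖Y‖ ≤ 2 * K * M ∧
      Matrix.diagonal μ * Y - Y * Matrix.diagonal ν + (E * Y - Y * F + S - Y * R * Y) = 0 := by
  have hK0 : 0 ≤ K := le_trans (by positivity) hK
  obtain ⟨Y, -, hYB, hYf, -⟩ := riccati_fixed {(0:ℂ)}
    (fun _ : ℂ → Matrix m n ℂ => True) (fun _ _ _ _ => trivial) trivial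
    (fun g t => Matrix.of fun i j => - (g t i j) / (μ i - ν j)) K hK0 (fun _ _ _ => trivial)
    (by
      intro g₁ g₂ h1 h2 hM1 hM2 D hD t ht
      have hD0 : 0 ≤ D := (norm_nonneg _).trans (hD t ht)
      have := norm_le_of_entry ((Matrix.of fun i j => - (g₁ t i j) / (μ i - ν j))
        - (Matrix.of fun i j => - (g₂ t i j) / (μ i - ν j))) (1 / δ * D) (by positivity) (by
          intro i j
          have e1 : ((Matrix.of fun i j => - (g₁ t i j) / (μ i - ν j))
            - (Matrix.of fun i j => - (g₂ t i j) / (μ i - ν j))) i j =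
            -((g₁ t - g₂ t) i j) / (μ i - ν j) := by simp; ring
          rw [e1, norm_div, norm_neg, div_mul_eq_mul_div, one_mul]
          have := (entry_le (g₁ t - g₂ t) i j).trans (hD t ht)
          have := hl i j
          gcongr)
      refine this.trans ?_
      rw [← mul_assoc]
      gcongr)
    (by intro t ht; ext i j; simp)
    (fun _ => E) (fun _ => F) (fun _ => R) (fun _ => S) e r M hM0 (fun _ _ => hE) (fun _ _ => hF)
    (fun _ _ => hR) (fun _ _ => hS) (fun _ _ => trivial) hsmall
  refine ⟨Y 0, hYB 0 rfl, ?_⟩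
  have h2 := hYf 0 rfl
  ext i j
  have h3 := congrFun (congrFun h2 i) j
  rw [Matrix.add_apply, diag_entry]
  simp only [Matrix.of_apply] at h3
  have hne : μ i - ν j ≠ 0 := by
    intro h; have := hl i j; rw [h] at this; simp at this; linarith
  rw [div_eq_iff hne] at h3
  rw [mul_comm, ← h3]
  simp

lemma log_mem_sector (κ s r₁ : ℝ) (hs : 0 < s) (hκ : s ≤ κ) (hr : 0 < r₁) (z : ℂ)
    (hz : z ∈ SlitBall (r₁ * Real.exp (-(4 / s)))) :
    z ∈ Complex.slitPlane ∧ Complex.log z ∈ Sector κ (Real.log r₁) := by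
  obtain ⟨h1, h2⟩ := hz
  have hsl : z ∈ Complex.slitPlane := h2.symm
  refine ⟨hsl, ?_⟩
  have hz0 : 0 < ‖z‖ := norm_pos_iff.2 (Complex.slitPlane_ne_zero hsl)
  simp only [Sector, mem_ofPred_eq, Complex.log_re, Complex.log_im]
  have h3 : Real.log ‖z‖ < Real.log r₁ - 4 / s := by
    have := Real.log_lt_log hz0 h1
    rw [Real.log_mul hr.ne' (Real.exp_pos _).ne', Real.log_exp] at this
    linarith
  have h4 : |z.arg| ≤ Real.pi := Complex.abs_arg_le_pi z
  have h5 : s * (4 / s) ≤ κ * (Real.log r₁ - Real.log ‖z‖) := by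
    have : 0 < 4 / s := by positivity
    apply mul_le_mul hκ (by linarith) this.le (by linarith)
  rw [mul_div_cancel₀ _ hs.ne'] at h5
  linarith [Real.pi_lt_four]

set_option maxHeartbeats 2000000 in
lemma riccati_diag (δ : ℝ) (hδ : 0 < δ) :
    ∃ e > 0, ∀ M r₁ : ℝ, 0 ≤ M → 0 < r₁ → r₁ ≤ 1 →
    ∃ ε > 0, ∃ ρ ∈ Ioc (0:ℝ) r₁, ∃ C > 0, ∀ h : ℝ, 0 < h → h ≤ ε →
    ∀ (μ : m → ℂ) (ν : n → ℂ), (∀ i j, δ ≤ ‖μ i - ν j‖) →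
    ∀ (E : ℂ → Matrix m m ℂ) (F : ℂ → Matrix n n ℂ) (R : ℂ → Matrix n m ℂ) (S : ℂ → Matrix m n ℂ),
    DifferentiableOn ℂ E (Metric.ball 0 r₁) → DifferentiableOn ℂ F (Metric.ball 0 r₁) →
    DifferentiableOn ℂ R (Metric.ball 0 r₁) → DifferentiableOn ℂ S (Metric.ball 0 r₁) →
    (∀ z ∈ Metric.ball (0:ℂ) r₁, ‖E z‖ ≤ e ∧ ‖F z‖ ≤ e ∧ ‖R z‖ ≤ ε ∧ ‖S z‖ ≤ M) →
    ∃ (X : ℂ → Matrix m n ℂ) (X₀ : Matrix m n ℂ),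
      Tendsto X (𝓝[SlitBall ρ] 0) (𝓝 X₀) ∧
      ∀ z ∈ SlitBall ρ, ‖X z‖ ≤ C ∧ ∃ X' : Matrix m n ℂ, HasDerivAt X X' z ∧
        (z * (h:ℂ)) • X' = Matrix.diagonal μ * X z - X z * Matrix.diagonal ν +
          (E z * X z - X z * F z + S z - X z * R z * X z) := by
  set s : ℝ := 1 / (2 * (2 * Fintype.card (m × n) + 1)) with hs
  have hs0 : 0 < s := by rw [hs]; positivity
  have hs1 : s ≤ 1 / 2 := by
    rw [hs, div_le_div_iff₀ (by positivity) (by norm_num)]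
    have : (0:ℝ) ≤ Fintype.card (m × n) := Nat.cast_nonneg _
    linarith
  set c : ℝ := δ * s / 8 with hc
  have hc0 : 0 < c := by positivity
  set K : ℝ := Fintype.card n * (2 / c) with hK
  have hK0 : 0 ≤ K := by positivity
  have hKδ : Fintype.card n * (1 / δ) ≤ K := by
    rw [hK]
    have : 1 / δ ≤ 2 / c := by
      rw [div_le_div_iff₀ hδ hc0, hc]; nlinarith
    gcongr
  set e : ℝ := min 1 (1 / (8 * (K + 1))) with he
  have he0 : 0 < e := by rw [he]; positivity
  have he1 : e ≤ 1 := min_le_left _ _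
  have heK : K * (2 * e) ≤ 1 / 4 := by
    have h1 : e * (8 * (K + 1)) ≤ 1 := by
      rw [← le_div_iff₀ (by positivity)]; exact min_le_right _ _
    nlinarith
  refine ⟨e, he0, ?_⟩
  intro M r₁ hM hr hr1
  set B : ℝ := 2 * K * M with hB
  have hB0 : 0 ≤ B := by positivity
  set G : ℝ := 2 * B + M + B * B with hG
  have hG0 : 0 ≤ G := by positivity
  set MY : ℝ := 2 * G / r₁ with hMY
  have hMY0 : 0 ≤ MY := by positivity
  set Z : ℝ := 2 * (1 + B) + 2 * (2 * K * MY) with hZ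
  have hZ0 : 0 ≤ Z := by positivity
  set ε : ℝ := min 1 (1 / (4 * (K + 1) * (Z + 1))) with hε
  have hε0 : 0 < ε := by rw [hε]; positivity
  have hε1 : ε ≤ 1 := min_le_left _ _
  have hεZ : K * (ε * Z) ≤ 1 / 4 := by
    have h1 : ε * (4 * (K + 1) * (Z + 1)) ≤ 1 := by
      rw [← le_div_iff₀ (by positivity)]; exact min_le_right _ _
    have h2 : 0 ≤ ε * K := by positivity
    have h3 : 0 ≤ ε * Z := by positivity
    nlinarith
  have hrho : r₁ * Real.exp (-(4 / s)) ≤ r₁ := by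
    apply mul_le_of_le_one_right hr.le
    rw [Real.exp_le_one_iff, neg_nonpos]; positivity
  refine ⟨ε, hε0, r₁ * Real.exp (-(4 / s)), ⟨by positivity, hrho⟩, B + 2 * K * MY + 1, by positivity, ?_⟩
  intro h hh hhε μ ν hl E F R S dE dF dR dS hbd
  have h0ball : (0:ℂ) ∈ Metric.ball (0:ℂ) r₁ := Metric.mem_ball_self hr
  obtain ⟨X₀, hX₀, hX₀e⟩ := riccati_algebraic δ hδ μ ν hl (E 0) (F 0) (R 0) (S 0) e ε M K hKδ hM
    (hbd 0 h0ball).1 (hbd 0 h0ball).2.1 (hbd 0 h0ball).2.2.1 (hbd 0 h0ball).2.2.2 (by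
      have : K * (2 * ε * B) ≤ K * (ε * Z) := by
        apply mul_le_mul_of_nonneg_left _ hK0
        rw [hZ]
        have : 0 ≤ ε * (K * MY) := by positivity
        nlinarith
      rw [← hB, mul_add]
      linarith)
  obtain ⟨κ, hκs, hκ1, hκ⟩ := exists_opening (ι := m × n) δ s hδ hs (fun q => μ q.1 - ν q.2)
    (fun q => hl q.1 q.2)
  set a := Real.log r₁ with ha
  set U := Sector κ a with hUdef
  have hU : IsOpen U := isOpen_sector κ a
  have hUb : ∀ t ∈ U, Complex.exp t ∈ Metric.ball (0:ℂ) r₁ := by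
    intro t ht
    rw [mem_ball_zero_iff, Complex.norm_exp]
    have h1 : 0 < κ * (a - t.re) := (abs_nonneg _).trans_lt ht
    have h2 : 0 < a - t.re := (pos_iff_pos_of_mul_pos h1).1 (hs0.trans_le hκs)
    calc Real.exp t.re < Real.exp a := Real.exp_lt_exp.2 (by linarith)
      _ = r₁ := Real.exp_log hr
  have hcomp : ∀ {p q : Type} [Fintype p] [Fintype q] (f : ℂ → Matrix p q ℂ),
      DifferentiableOn ℂ f (Metric.ball 0 r₁) → DifferentiableOn ℂ (fun t => f (Complex.exp t)) U := by
    intro p q _ _ f hf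
    exact hf.comp Complex.differentiable_exp.differentiableOn hUb
  -- the function G(z, X₀)
  set g : ℂ → Matrix m n ℂ := fun z => E z * X₀ - X₀ * F z + S z - X₀ * R z * X₀ with hg
  have dc : ∀ {p q : Type} [Fintype p] [Fintype q] (f : Matrix p q ℂ) (V : Set ℂ),
      DifferentiableOn ℂ (fun _ : ℂ => f) V := fun f V => differentiableOn_const _
  have dg : DifferentiableOn ℂ g (Metric.ball 0 r₁) := by
    have hO := Metric.isOpen_ball (x := (0:ℂ)) (ε := r₁)
    exact (((differentiableOn_matmul hO dE (dc _ _)).sub (differentiableOn_matmul hO (dc _ _) dF)).add dS).sub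
      (differentiableOn_matmul hO (differentiableOn_matmul hO (dc _ _) dR) (dc _ _))
  have hgb : ∀ z ∈ Metric.ball (0:ℂ) r₁, ‖g z‖ ≤ G := by
    intro z hz
    obtain ⟨b1, b2, b3, b4⟩ := hbd z hz
    have t1 : ‖E z * X₀‖ ≤ 1 * B := (Matrix.linfty_opNorm_mul _ _).trans
      (mul_le_mul (b1.trans he1) hX₀ (norm_nonneg _) zero_le_one)
    have t2 : ‖X₀ * F z‖ ≤ B * 1 := (Matrix.linfty_opNorm_mul _ _).trans
      (mul_le_mul hX₀ (b2.trans he1) (norm_nonneg _) hB0)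
    have t3 : ‖X₀ * R z‖ ≤ B * 1 := (Matrix.linfty_opNorm_mul _ _).trans
      (mul_le_mul hX₀ (b3.trans hε1) (norm_nonneg _) hB0)
    have t4 : ‖X₀ * R z * X₀‖ ≤ (B * 1) * B := (Matrix.linfty_opNorm_mul _ _).trans
      (mul_le_mul t3 hX₀ (norm_nonneg _) (by positivity))
    have s1 := norm_sub_le (E z * X₀ - X₀ * F z + S z) (X₀ * R z * X₀)
    have s2 := norm_add_le (E z * X₀ - X₀ * F z) (S z)
    have s3 := norm_sub_le (E z * X₀) (X₀ * F z)
    rw [hg, hG]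
    simp only
    linarith
  have hgd : ∀ z ∈ Metric.ball (0:ℂ) r₁, ‖g z - g 0‖ ≤ MY * ‖z‖ := by
    intro z hz
    have := Complex.dist_le_div_mul_dist_of_mapsTo_ball (R₂ := 2 * G) dg (by
      intro w hw
      rw [mem_closedBall_iff_norm]
      refine (norm_sub_le _ _).trans ?_
      linarith [hgb w hw, hgb 0 h0ball]) hz
    rwa [dist_eq_norm, dist_zero_right] at this
  have hone : ‖((h:ℂ) • (1 : Matrix m m ℂ))‖ ≤ h := by
    have : ((h:ℂ) • (1 : Matrix m m ℂ)) = Matrix.diagonal (fun _ => (h:ℂ)) := by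
      rw [Matrix.smul_one_eq_diagonal]
    rw [this, Matrix.linfty_opNorm_diagonal]
    refine (pi_norm_le_iff_of_nonneg hh.le).2 fun i => ?_
    simp [abs_of_pos hh]
  obtain ⟨Y, hY⟩ := riccati_sector κ a c h (hs0.trans_le hκs) hκ1 hc0 hh μ ν
    (fun i j => hκ (i, j))
    (fun t => E (Complex.exp t) - X₀ * R (Complex.exp t) - (h:ℂ) • (1 : Matrix m m ℂ))
    (fun t => F (Complex.exp t) + R (Complex.exp t) * X₀)
    (fun t => Complex.exp t • R (Complex.exp t))
    (fun t => (Complex.exp t)⁻¹ • (g (Complex.exp t) - g 0))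
    (((hcomp E dE).sub (differentiableOn_matmul hU (dc _ _) (hcomp R dR))).sub (dc _ _))
    ((hcomp F dF).add (differentiableOn_matmul hU (hcomp R dR) (dc _ _)))
    (Complex.differentiable_exp.differentiableOn.smul (hcomp R dR))
    ((Complex.differentiable_exp.differentiableOn.inv fun t _ => Complex.exp_ne_zero t).smul
      ((hcomp g dg).sub (dc _ _)))
    (e + (1 + B) * ε) ε MY K hK hMY0
    (by
      intro t ht
      obtain ⟨b1, b2, b3, b4⟩ := hbd _ (hUb t ht)
      have t3 : ‖X₀ * R (Complex.exp t)‖ ≤ B * ε := (Matrix.linfty_opNorm_mul _ _).trans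
        (mul_le_mul hX₀ b3 (norm_nonneg _) hB0)
      have s1 := norm_sub_le (E (Complex.exp t) - X₀ * R (Complex.exp t)) ((h:ℂ) • (1 : Matrix m m ℂ))
      have s2 := norm_sub_le (E (Complex.exp t)) (X₀ * R (Complex.exp t))
      linarith)
    (by
      intro t ht
      obtain ⟨b1, b2, b3, b4⟩ := hbd _ (hUb t ht)
      have t3 : ‖R (Complex.exp t) * X₀‖ ≤ ε * B := (Matrix.linfty_opNorm_mul _ _).trans
        (mul_le_mul b3 hX₀ (norm_nonneg _) hε0.le)
      have s2 := norm_add_le (F (Complex.exp t)) (R (Complex.exp t) * X₀)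
      linarith)
    (by
      intro t ht
      obtain ⟨b1, b2, b3, b4⟩ := hbd _ (hUb t ht)
      rw [norm_smul]
      have h1 : ‖Complex.exp t‖ ≤ 1 := by
        have := hUb t ht
        rw [mem_ball_zero_iff] at this
        linarith
      calc _ ≤ 1 * ε := mul_le_mul h1 b3 (norm_nonneg _) zero_le_one
        _ = ε := one_mul _)
    (by
      intro t ht
      rw [norm_smul, norm_inv, inv_mul_le_iff₀ (norm_pos_iff.2 (Complex.exp_ne_zero t)), mul_comm]
      exact hgd _ (hUb t ht))
    (by
      have : K * (2 * (e + (1 + B) * ε) + 2 * ε * (2 * K * MY)) = K * (2 * e) + K * (ε * Z) := by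
        rw [hZ]; ring
      rw [this]
      linarith)
  refine ⟨fun z => X₀ + z • Y (Complex.log z), X₀, ?_, ?_⟩
  · have h1 : Tendsto (fun z : ℂ => ‖z‖ * (2 * K * MY)) (𝓝[SlitBall (r₁ * Real.exp (-(4 / s)))] 0) (𝓝 0) := by
      have : Tendsto (fun z : ℂ => ‖z‖ * (2 * K * MY)) (𝓝 0) (𝓝 (‖(0:ℂ)‖ * (2 * K * MY))) :=
        (continuous_norm.mul continuous_const).tendsto 0
      simp only [norm_zero, zero_mul] at this
      exact this.mono_left nhdsWithin_le_nhds
    refine tendsto_iff_norm_sub_tendsto_zero.2 ?_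
    refine squeeze_zero' (Eventually.of_forall fun _ => norm_nonneg _) ?_ h1
    filter_upwards [self_mem_nhdsWithin] with z hz
    rw [add_sub_cancel_left, norm_smul]
    gcongr
    exact (hY _ (log_mem_sector κ s r₁ hs0 hκs hr z hz).2).1
  · intro z hz
    obtain ⟨hzs, hzl⟩ := log_mem_sector κ s r₁ hs0 hκs hr z hz
    have hz0 : z ≠ 0 := Complex.slitPlane_ne_zero hzs
    obtain ⟨hYb, hYd⟩ := hY _ hzl
    have hz1 : ‖z‖ ≤ 1 := by
      have := hz.1
      linarith
    refine ⟨?_, ?_⟩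
    · refine (norm_add_le _ _).trans ?_
      rw [norm_smul]
      have : ‖z‖ * ‖Y (Complex.log z)‖ ≤ 1 * (2 * K * MY) :=
        mul_le_mul hz1 hYb (norm_nonneg _) zero_le_one
      linarith
    · have hd := ((hasDerivAt_id z).smul (hYd.scomp z (Complex.hasDerivAt_log hzs))).const_add X₀
      refine ⟨_, hd, ?_⟩
      have hhc : (h:ℂ) ≠ 0 := by exact_mod_cast hh.ne'
      simp only [Complex.exp_log hz0, id_eq, Function.comp_apply]
      have hA : Matrix.diagonal μ * X₀ - X₀ * Matrix.diagonal ν = - g 0 := by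
        rw [eq_neg_iff_add_eq_zero]; exact hX₀e
      generalize Y (Complex.log z) = y
      have hgz : g z = E z * X₀ - X₀ * F z + S z - X₀ * R z * X₀ := rfl
      have hA' : Matrix.diagonal μ * X₀ = X₀ * Matrix.diagonal ν - g 0 := by
        rw [sub_eq_iff_eq_add] at hA; rw [hA]; abel
      have hS : S z = g z - E z * X₀ + X₀ * F z + X₀ * R z * X₀ := by rw [hgz]; abel
      simp only [Matrix.mul_add, Matrix.add_mul, Matrix.sub_mul, Matrix.mul_smul,
        Matrix.smul_mul, Matrix.one_mul, hA', hS, Matrix.mul_assoc, smul_smul, smul_add, smul_sub]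
      match_scalars <;> field_simp <;> ring
end Riccati2


section Tri

/-- `A` is conjugated, by matrices with entries bounded by `K`, to a matrix that is `η`-close to
a diagonal matrix of eigenvalues. -/
def TriConc {ι : Type} [Fintype ι] [DecidableEq ι] (A : Matrix ι ι ℂ) (K η : ℝ) : Prop :=
  ∃ (P Q : Matrix ι ι ℂ) (μ : ι → ℂ), P * Q = 1 ∧ Q * P = 1 ∧
    (∀ i j, ‖P i j‖ ≤ K) ∧ (∀ i j, ‖Q i j‖ ≤ K) ∧ (∀ i, μ i ∈ spectrum ℂ A) ∧
    ∀ i j, ‖(Q * A * P - Matrix.diagonal μ) i j‖ ≤ η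

lemma tri_equiv {ι κ : Type} [Fintype ι] [DecidableEq ι] [Fintype κ] [DecidableEq κ]
    (A : Matrix ι ι ℂ) (e : κ ≃ ι) (K η : ℝ) (h : TriConc (A.submatrix e e) K η) :
    TriConc A K η := by
  obtain ⟨P, Q, μ, h1, h2, h3, h4, h5, h6⟩ := h
  have hsub : A = (A.submatrix e e).submatrix e.symm e.symm := by simp
  refine ⟨P.submatrix e.symm e.symm, Q.submatrix e.symm e.symm, μ ∘ e.symm, ?_, ?_,
    fun i j => h3 _ _, fun i j => h4 _ _, fun i => ?_, fun i j => ?_⟩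
  · rw [Matrix.submatrix_mul_equiv, h1, Matrix.submatrix_one_equiv]
  · rw [Matrix.submatrix_mul_equiv, h2, Matrix.submatrix_one_equiv]
  · have := h5 (e.symm i)
    rw [Matrix.mem_spectrum_iff_isRoot_charpoly] at this ⊢
    have e1 : (A.submatrix e e).charpoly = A.charpoly := by
      have := Matrix.charpoly_reindex e.symm A
      simpa [Matrix.reindex_apply] using this
    rwa [e1] at this
  · have e1 : Q.submatrix e.symm e.symm * A * P.submatrix e.symm e.symm - Matrix.diagonal (μ ∘ e.symm)
        = (Q * A.submatrix e e * P - Matrix.diagonal μ).submatrix e.symm e.symm := by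
      conv_lhs => rw [hsub]
      rw [Matrix.submatrix_mul_equiv, Matrix.submatrix_mul_equiv,
        ← Matrix.submatrix_diagonal_equiv]
      rfl
    rw [e1]
    exact h6 _ _

lemma entry_mul_le {l m n : Type} [Fintype m] (X : Matrix l m ℂ) (Y : Matrix m n ℂ) (a b : ℝ)
    (ha : 0 ≤ a) (hX : ∀ i j, ‖X i j‖ ≤ a) (hY : ∀ i j, ‖Y i j‖ ≤ b) (i : l) (j : n) :
    ‖(X * Y) i j‖ ≤ Fintype.card m * (a * b) := by
  rw [Matrix.mul_apply]
  refine (norm_sum_le _ _).trans ?_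
  calc _ ≤ ∑ q : m, a * b := Finset.sum_le_sum fun q _ => by
        rw [norm_mul]; exact mul_le_mul (hX _ _) (hY _ _) (norm_nonneg _) ha
    _ = _ := by simp

lemma tri_block {κ : Type} [Fintype κ] [DecidableEq κ] (C η K' : ℝ) (hC : 0 ≤ C) (hη : 0 < η)
    (hK' : 0 ≤ K')
    (IH : ∀ A : Matrix κ κ ℂ, (∀ i j, ‖A i j‖ ≤ 2 * C) → TriConc A K' η) :
    ∃ K, 0 ≤ K ∧ ∀ (A : Matrix (Unit ⊕ κ) (Unit ⊕ κ) ℂ) (v : Unit ⊕ κ → ℂ) (lam : ℂ),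
      (∀ i j, ‖A i j‖ ≤ C) → v (Sum.inl ()) = 1 → (∀ i, ‖v i‖ ≤ 1) → A.mulVec v = lam • v →
      TriConc A K η := by
  set N : ℝ := (Fintype.card κ : ℝ) with hN
  have hN0 : 0 ≤ N := Nat.cast_nonneg _
  set s : ℝ := η / (N * (C * K') + 1) with hs
  have hs0 : 0 < s := by positivity
  have hsη : s * (N * (C * K')) ≤ η := by
    rw [hs, div_mul_eq_mul_div, div_le_iff₀ (by positivity)]
    nlinarith
  have hsc : (s:ℂ) ≠ 0 := by exact_mod_cast hs0.ne'
  refine ⟨1 + s * K' + s⁻¹ * K' + s⁻¹ * (N * (K' * 1)), by positivity, ?_⟩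
  set K : ℝ := 1 + s * K' + s⁻¹ * K' + s⁻¹ * (N * (K' * 1)) with hK
  have p1 : 0 ≤ s * K' := by positivity
  have p2 : 0 ≤ s⁻¹ * K' := by positivity
  have p3 : 0 ≤ s⁻¹ * (N * (K' * 1)) := by positivity
  intro A v lam hA hv0 hv hAv
  set a := A.toBlocks₁₁ with ha
  set b := A.toBlocks₁₂ with hb
  set c := A.toBlocks₂₁ with hc
  set d := A.toBlocks₂₂ with hd
  have hAb : A = Matrix.fromBlocks a b c d := (Matrix.fromBlocks_toBlocks A).symm
  set w : Matrix κ Unit ℂ := Matrix.of fun i _ => v (Sum.inr i) with hw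
  have e1 : a + b * w = lam • (1 : Matrix Unit Unit ℂ) := by
    ext i j
    have := congrFun hAv (Sum.inl ())
    simp only [Matrix.mulVec, dotProduct, Fintype.sum_sum_type, Pi.smul_apply, hv0, smul_eq_mul] at this
    simp only [Matrix.add_apply, Matrix.mul_apply, Matrix.smul_apply, smul_eq_mul]
    simpa [ha, hb, hw, Matrix.toBlocks₁₁, Matrix.toBlocks₁₂, hv0] using this
  have e2 : c + d * w = lam • w := by
    ext i j
    have := congrFun hAv (Sum.inr i)
    simp only [Matrix.mulVec, dotProduct, Fintype.sum_sum_type, Pi.smul_apply, smul_eq_mul] at this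
    simp only [Matrix.add_apply, Matrix.mul_apply, Matrix.smul_apply, smul_eq_mul]
    simpa [hc, hd, hw, Matrix.toBlocks₂₁, Matrix.toBlocks₂₂, hv0] using this
  set A' := d - w * b with hA'
  have hw1 : ∀ i j, ‖w i j‖ ≤ 1 := fun i j => hv _
  obtain ⟨P', Q', μ', h1, h2, h3, h4, h5, h6⟩ := IH A' (by
    intro i j
    have t1 := entry_mul_le w b 1 C zero_le_one hw1 (fun i j => hA _ _) i j
    have t2 : ‖d i j‖ ≤ C := hA _ _
    have := norm_sub_le (d i j) ((w * b) i j)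
    simp only [Fintype.card_unit] at t1
    rw [hA', Matrix.sub_apply]
    push_cast at t1
    linarith)
  have key : Matrix.fromBlocks 1 0 (-w) 1 * A * Matrix.fromBlocks 1 0 w 1
      = Matrix.fromBlocks (lam • 1) b 0 A' := by
    rw [hAb, Matrix.fromBlocks_multiply, Matrix.fromBlocks_multiply]
    simp only [Matrix.one_mul, Matrix.zero_mul, Matrix.mul_one, Matrix.mul_zero, add_zero, zero_add,
      Matrix.neg_mul]
    congr 1
    · have : -(w * a) + c + (-(w * b) + d) * w = (c + d * w) - w * (a + b * w) := by
        simp only [Matrix.add_mul, Matrix.mul_add, Matrix.neg_mul, Matrix.mul_assoc]; abel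
      rw [this, e1, e2]; simp
    · rw [hA']; abel
  have inv1 : Matrix.fromBlocks (1 : Matrix Unit Unit ℂ) 0 (-w) 1 * Matrix.fromBlocks 1 0 w (1 : Matrix κ κ ℂ) = 1 := by
    rw [Matrix.fromBlocks_multiply]; simp
  have inv2 : Matrix.fromBlocks (1 : Matrix Unit Unit ℂ) 0 w 1 * Matrix.fromBlocks 1 0 (-w) (1 : Matrix κ κ ℂ) = 1 := by
    rw [Matrix.fromBlocks_multiply]; simp
  have hchar : A.charpoly = (lam • (1 : Matrix Unit Unit ℂ)).charpoly * A'.charpoly := by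
    rw [← Matrix.charpoly_fromBlocks_zero₂₁ (lam • (1 : Matrix Unit Unit ℂ)) b A', ← key,
      Matrix.mul_assoc, Matrix.charpoly_mul_comm, Matrix.mul_assoc, inv2, Matrix.mul_one]
  refine ⟨Matrix.fromBlocks 1 0 w ((s:ℂ) • P'), Matrix.fromBlocks 1 0 (-((s:ℂ)⁻¹ • (Q' * w))) ((s:ℂ)⁻¹ • Q'),
    Sum.elim (fun _ => lam) μ', ?_, ?_, ?_, ?_, ?_, ?_⟩
  · rw [Matrix.fromBlocks_multiply]
    simp only [Matrix.one_mul, Matrix.zero_mul, Matrix.mul_one, Matrix.mul_zero, add_zero, zero_add,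
      Matrix.mul_neg, Matrix.smul_mul, Matrix.mul_smul, smul_smul, mul_inv_cancel₀ hsc, inv_mul_cancel₀ hsc,
      one_smul, ← Matrix.mul_assoc, h1]
    simp
  · rw [Matrix.fromBlocks_multiply]
    simp only [Matrix.one_mul, Matrix.zero_mul, Matrix.mul_one, Matrix.mul_zero, add_zero, zero_add,
      Matrix.smul_mul, Matrix.mul_smul, smul_smul, mul_inv_cancel₀ hsc,
      one_smul, h2]
    simp
  · have hP : ∀ i j, ‖((s:ℂ) • P') i j‖ ≤ s * K' := fun i j => by
      rw [Matrix.smul_apply, norm_smul, Complex.norm_real, Real.norm_of_nonneg hs0.le]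
      exact mul_le_mul_of_nonneg_left (h3 _ _) hs0.le
    rintro (i | i) (j | j)
    · simp only [Matrix.fromBlocks_apply₁₁, Matrix.one_apply_eq]; rw [norm_one]; linarith
    · simp only [Matrix.fromBlocks_apply₁₂, Matrix.zero_apply, norm_zero]; linarith
    · simp only [Matrix.fromBlocks_apply₂₁]; linarith [hw1 i j]
    · simp only [Matrix.fromBlocks_apply₂₂]; linarith [hP i j]
  · have hs' : ‖(s:ℂ)⁻¹‖ = s⁻¹ := by rw [norm_inv, Complex.norm_real, Real.norm_of_nonneg hs0.le]
    have hP : ∀ i j, ‖((s:ℂ)⁻¹ • Q') i j‖ ≤ s⁻¹ * K' := fun i j => by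
      rw [Matrix.smul_apply, norm_smul, hs']
      exact mul_le_mul_of_nonneg_left (h4 _ _) (by positivity)
    have hQ : ∀ i j, ‖((s:ℂ)⁻¹ • (Q' * w)) i j‖ ≤ s⁻¹ * (N * (K' * 1)) := fun i j => by
      rw [Matrix.smul_apply, norm_smul, hs']
      exact mul_le_mul_of_nonneg_left (entry_mul_le Q' w K' 1 hK' h4 hw1 _ _) (by positivity)
    rintro (i | i) (j | j)
    · simp only [Matrix.fromBlocks_apply₁₁, Matrix.one_apply_eq]; rw [norm_one]; linarith
    · simp only [Matrix.fromBlocks_apply₁₂, Matrix.zero_apply, norm_zero]; linarith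
    · simp only [Matrix.fromBlocks_apply₂₁, Matrix.neg_apply, norm_neg]; linarith [hQ i j]
    · simp only [Matrix.fromBlocks_apply₂₂]; linarith [hP i j]
  · rintro (i | i)
    · rw [Matrix.mem_spectrum_iff_isRoot_charpoly, hchar, Polynomial.IsRoot, Polynomial.eval_mul,
        Sum.elim_inl]
      have : Polynomial.eval lam (lam • (1 : Matrix Unit Unit ℂ)).charpoly = 0 := by
        simp [Matrix.charpoly, Matrix.charmatrix]
      rw [this, zero_mul]
    · have := h5 i
      rw [Matrix.mem_spectrum_iff_isRoot_charpoly, Polynomial.IsRoot] at this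
      rw [Matrix.mem_spectrum_iff_isRoot_charpoly, hchar, Polynomial.IsRoot, Polynomial.eval_mul,
        Sum.elim_inr, this, mul_zero]
  · have f1 : Matrix.fromBlocks (1 : Matrix Unit Unit ℂ) 0 w ((s:ℂ) • P')
        = Matrix.fromBlocks 1 0 w 1 * Matrix.fromBlocks 1 0 0 ((s:ℂ) • P') := by
      rw [Matrix.fromBlocks_multiply]; simp
    have f2 : Matrix.fromBlocks (1 : Matrix Unit Unit ℂ) 0 (-((s:ℂ)⁻¹ • (Q' * w))) ((s:ℂ)⁻¹ • Q')
        = Matrix.fromBlocks 1 0 0 ((s:ℂ)⁻¹ • Q') * Matrix.fromBlocks 1 0 (-w) 1 := by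
      rw [Matrix.fromBlocks_multiply]; simp
    have f3 : Matrix.fromBlocks 1 0 (-((s:ℂ)⁻¹ • (Q' * w))) ((s:ℂ)⁻¹ • Q') * A *
        Matrix.fromBlocks 1 0 w ((s:ℂ) • P') - Matrix.diagonal (Sum.elim (fun _ => lam) μ')
        = Matrix.fromBlocks 0 ((s:ℂ) • (b * P')) 0 (Q' * A' * P' - Matrix.diagonal μ') := by
      have : Matrix.fromBlocks 1 0 0 ((s:ℂ)⁻¹ • Q') * Matrix.fromBlocks 1 0 (-w) 1 * A *
        (Matrix.fromBlocks 1 0 w 1 * Matrix.fromBlocks 1 0 0 ((s:ℂ) • P')) =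
        Matrix.fromBlocks 1 0 0 ((s:ℂ)⁻¹ • Q') * (Matrix.fromBlocks 1 0 (-w) 1 * A *
        Matrix.fromBlocks 1 0 w 1) * Matrix.fromBlocks 1 0 0 ((s:ℂ) • P') := by
        simp only [Matrix.mul_assoc]
      rw [f1, f2, this, key, Matrix.fromBlocks_multiply, Matrix.fromBlocks_multiply]
      rw [show (Matrix.diagonal (Sum.elim (fun _ : Unit => lam) μ')) =
        Matrix.fromBlocks (lam • 1) 0 0 (Matrix.diagonal μ') by
          rw [← Matrix.fromBlocks_diagonal, Matrix.smul_one_eq_diagonal]]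
      rw [sub_eq_add_neg, Matrix.fromBlocks_neg, Matrix.fromBlocks_add]
      simp only [Matrix.one_mul, Matrix.zero_mul, Matrix.mul_one, Matrix.mul_zero, add_zero, zero_add,
        Matrix.smul_mul, Matrix.mul_smul, smul_smul, mul_inv_cancel₀ hsc, one_smul, smul_zero, neg_zero, ← sub_eq_add_neg, sub_self]
    rw [f3]
    rintro (i | i) (j | j)
    · simpa using hη.le
    · simp only [Matrix.fromBlocks_apply₁₂]
      rw [Matrix.smul_apply, norm_smul, Complex.norm_real, Real.norm_of_nonneg hs0.le]
      refine le_trans (mul_le_mul_of_nonneg_left (entry_mul_le b P' C K' hC (fun i j => hA _ _) h3 _ _) hs0.le) hsη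
    · simpa using hη.le
    · exact h6 i j

lemma tri_fin (η : ℝ) (hη : 0 < η) (n : ℕ) : ∀ C : ℝ, 0 ≤ C → ∃ K, 0 ≤ K ∧
    ∀ A : Matrix (Fin n) (Fin n) ℂ, (∀ i j, ‖A i j‖ ≤ C) → TriConc A K η := by
  induction n with
  | zero =>
    intro C hC
    refine ⟨0, le_rfl, fun A _ => ⟨1, 1, fun _ => 0, by simp, by simp, ?_, ?_, ?_, ?_⟩⟩ <;>
    · intro i; exact i.elim0
  | succ n ih =>
    intro C hC
    obtain ⟨K', hK', IH⟩ := ih (2 * C) (by positivity)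
    obtain ⟨K, hK, H⟩ := tri_block C η K' hC hη hK' IH
    refine ⟨K, hK, fun A hA => ?_⟩
    obtain ⟨lam, hlam⟩ := Module.End.exists_eigenvalue (Matrix.toLin' A)
    obtain ⟨v, hv⟩ := hlam.exists_hasEigenvector
    have hv1 : A.mulVec v = lam • v := by
      have := hv.apply_eq_smul
      rwa [Matrix.toLin'_apply] at this
    have hv0 : v ≠ 0 := hv.2
    obtain ⟨i0, hi0⟩ := Finite.exists_max (fun i => ‖v i‖)
    have hvi : v i0 ≠ 0 := by
      intro h
      apply hv0
      ext i
      have := hi0 i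
      rw [h, norm_zero] at this
      simpa using this
    obtain ⟨e0⟩ : Nonempty (Unit ⊕ Fin n ≃ Fin (n+1)) := by
      rw [← Fintype.card_eq]; simp [add_comm]
    set e := e0.trans (Equiv.swap (e0 (Sum.inl ())) i0) with he
    have hei : e (Sum.inl ()) = i0 := by simp [he]
    apply tri_equiv A e
    apply H _ (fun i => (v i0)⁻¹ * v (e i)) lam (fun i j => hA _ _)
    · simp [hei, hvi]
    · intro i
      rw [norm_mul, norm_inv, inv_mul_le_iff₀ (norm_pos_iff.2 hvi), mul_one]
      exact hi0 _
    · ext i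
      have h1 := congrFun hv1 (e i)
      simp only [Matrix.mulVec, dotProduct, Pi.smul_apply, smul_eq_mul] at h1
      simp only [Matrix.mulVec, dotProduct, Pi.smul_apply, smul_eq_mul]
      rw [Equiv.sum_comp e (fun j => A (e i) j * ((v i0)⁻¹ * v j))]
      rw [mul_left_comm, ← h1, Finset.mul_sum]
      exact Finset.sum_congr rfl fun j _ => by ring

end Tri



section General

variable {m n : Type} [Fintype m] [Fintype n] [DecidableEq m] [DecidableEq n]

lemma norm_conj_le {k l : Type} [Fintype k] [Fintype l] (Q : Matrix k m ℂ) (A : Matrix m n ℂ)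
    (P : Matrix n l ℂ) (K c : ℝ)
    (hQ : ‖Q‖ ≤ K) (hP : ‖P‖ ≤ K) (hA : ‖A‖ ≤ c) : ‖Q * A * P‖ ≤ K * c * K := by
  have hK : 0 ≤ K := (norm_nonneg _).trans hQ
  have hc : 0 ≤ c := (norm_nonneg _).trans hA
  exact (Matrix.linfty_opNorm_mul _ _).trans (mul_le_mul ((Matrix.linfty_opNorm_mul _ _).trans
    (mul_le_mul hQ hA (norm_nonneg _) hK)) hP (norm_nonneg _) (by positivity))

lemma conj_bound (Q P A A0 X D : Matrix m m ℂ) (K c1 c2 c3 : ℝ) (hQ : ‖Q‖ ≤ K) (hP : ‖P‖ ≤ K)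
    (h1 : ‖A - A0‖ ≤ c1) (h2 : ‖Q * A0 * P - D‖ ≤ c2) (h3 : ‖X‖ ≤ c3) :
    ‖Q * (A + X) * P - D‖ ≤ K * c1 * K + c2 + K * c3 * K := by
  have e : Q * (A + X) * P - D = Q * (A - A0) * P + (Q * A0 * P - D) + Q * X * P := by
    simp only [Matrix.mul_add, Matrix.mul_sub, Matrix.add_mul, Matrix.sub_mul]; abel
  rw [e]
  refine (norm_add_le _ _).trans (add_le_add ((norm_add_le _ _).trans (add_le_add ?_ h2)) ?_)
  · exact norm_conj_le _ _ _ _ _ hQ hP h1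
  · exact norm_conj_le _ _ _ _ _ hQ hP h3

lemma conj_alg (P2 Q2 A Dμ : Matrix m m ℂ) (P1 Q1 B Dν : Matrix n n ℂ) (S X : Matrix m n ℂ)
    (R : Matrix n m ℂ) (c : ℂ) (h2 : P2 * Q2 = 1) (h1 : P1 * Q1 = 1) :
    P2 * (Dμ * X - X * Dν + ((Q2 * A * P2 - Dμ) * X - X * (Q1 * B * P1 - Dν) + Q2 * S * P1
      - X * (c • (Q1 * R * P2)) * X)) * Q1 =
    A * (P2 * X * Q1) - (P2 * X * Q1) * B + S - c • ((P2 * X * Q1) * R * (P2 * X * Q1)) := by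
  have h3 : ∀ {q : Type} (Y : Matrix m q ℂ), P2 * (Q2 * Y) = Y := fun Y => by
    rw [← Matrix.mul_assoc, h2, Matrix.one_mul]
  simp only [Matrix.mul_add, Matrix.mul_sub, Matrix.add_mul, Matrix.sub_mul, Matrix.mul_assoc,
    Matrix.smul_mul, Matrix.mul_smul, h3, h1, Matrix.mul_one]
  abel

lemma diff_conj {k l : Type} [Fintype k] [Fintype l] [DecidableEq k] [DecidableEq l] {U : Set ℂ} (hU : IsOpen U)
    (Q : Matrix k m ℂ) (P : Matrix n l ℂ)
    (f : ℂ → Matrix m n ℂ) (hf : DifferentiableOn ℂ f U) :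
    DifferentiableOn ℂ (fun z => Q * f z * P) U :=
  differentiableOn_matmul hU (differentiableOn_matmul hU (differentiableOn_const _) hf)
    (differentiableOn_const _)

lemma diff_conj_add {U : Set ℂ} (hU : IsOpen U) (Q P D : Matrix m m ℂ) (c : ℂ)
    (f g : ℂ → Matrix m m ℂ) (hf : DifferentiableOn ℂ f U) (hg : DifferentiableOn ℂ g U) :
    DifferentiableOn ℂ (fun z => Q * (f z + c • g z) * P - D) U := by
  have h1 : DifferentiableOn ℂ (fun z => f z + c • g z) U := hf.add (hg.const_smul c)
  exact (diff_conj hU Q P _ h1).sub_const D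

lemma diff_conj_smul {U : Set ℂ} (hU : IsOpen U) (Q : Matrix n n ℂ) (P : Matrix m m ℂ) (c : ℂ)
    (f : ℂ → Matrix n m ℂ) (hf : DifferentiableOn ℂ f U) :
    DifferentiableOn ℂ (fun z => c • (Q * f z * P)) U :=
  (diff_conj hU Q P f hf).const_smul c

lemma lip_ball {q : Type} [Fintype q] (f : ℂ → Matrix q q ℂ) (C r r₁ : ℝ) (hC0 : 0 ≤ C) (hr : 0 < r)
    (hr₁r : r₁ ≤ r) (hf : DifferentiableOn ℂ f (Metric.ball 0 r))
    (hfC : ∀ z ∈ Metric.ball (0:ℂ) r, ‖f z‖ ≤ C) (z : ℂ) (hz : z ∈ Metric.ball (0:ℂ) r₁) :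
      ‖f z - f 0‖ ≤ 2 * C / r * r₁ := by
  have h0ball : (0:ℂ) ∈ Metric.ball (0:ℂ) r := Metric.mem_ball_self hr
  have := Complex.dist_le_div_mul_dist_of_mapsTo_ball (R₂ := 2 * C) hf (by
      intro w hw
      rw [mem_closedBall_iff_norm]
      refine (norm_sub_le _ _).trans ?_
      linarith [hfC w hw, hfC 0 h0ball]) (Metric.ball_subset_ball hr₁r hz)
  rw [dist_eq_norm, dist_zero_right] at this
  refine this.trans (mul_le_mul_of_nonneg_left (mem_ball_zero_iff.1 hz).le (by positivity))

lemma conj_tail (P2 Q2 Dμ : Matrix m m ℂ) (P1 Q1 Dν : Matrix n n ℂ) (K Cβ h : ℝ)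
    (nP2 : ‖P2‖ ≤ K) (nQ1 : ‖Q1‖ ≤ K) (a1 : P2 * Q2 = 1) (b1 : P1 * Q1 = 1) (ρ : ℝ) (c : ℂ)
    (A : ℂ → Matrix m m ℂ) (B : ℂ → Matrix n n ℂ) (S : ℂ → Matrix m n ℂ) (R : ℂ → Matrix n m ℂ)
    (X : ℂ → Matrix m n ℂ) (X₀ : Matrix m n ℂ)
    (hXt : Tendsto X (𝓝[SlitBall ρ] 0) (𝓝 X₀))
    (hX : ∀ z ∈ SlitBall ρ, ‖X z‖ ≤ Cβ ∧ ∃ X' : Matrix m n ℂ, HasDerivAt X X' z ∧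
        (z * (h:ℂ)) • X' = Dμ * X z - X z * Dν +
          ((Q2 * A z * P2 - Dμ) * X z - X z * (Q1 * B z * P1 - Dν) + Q2 * S z * P1
            - X z * (c • (Q1 * R z * P2)) * X z)) :
    ∃ (β : ℂ → Matrix m n ℂ) (β₀ : Matrix m n ℂ),
      Tendsto β (𝓝[SlitBall ρ] 0) (𝓝 β₀) ∧ ∀ z ∈ SlitBall ρ, ‖β z‖ ≤ K * Cβ * K + 1 ∧
        ∃ β' : Matrix m n ℂ, HasDerivAt β β' z ∧
        (z * (h:ℂ)) • β' = A z * β z - β z * B z + S z - c • (β z * R z * β z) := by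
  refine ⟨fun z => P2 * X z * Q1, P2 * X₀ * Q1, ?_, ?_⟩
  · have hc : Continuous fun Y : Matrix m n ℂ => P2 * Y * Q1 :=
      Continuous.matrix_mul (Continuous.matrix_mul continuous_const continuous_id) continuous_const
    exact (hc.tendsto X₀).comp hXt
  · intro z hz
    obtain ⟨hXb, X', hX', hXe⟩ := hX z hz
    refine ⟨?_, P2 * X' * Q1, ?_, ?_⟩
    · linarith [norm_conj_le P2 (X z) Q1 K Cβ nP2 nQ1 hXb]
    · have := hasDerivAt_matmul (hasDerivAt_matmul (hasDerivAt_const z P2) hX') (hasDerivAt_const z Q1)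
      refine this.congr_deriv ?_
      simp
    · have e1 : (z * (h:ℂ)) • (P2 * X' * Q1) = P2 * ((z * (h:ℂ)) • X') * Q1 := by
        rw [Matrix.mul_smul, Matrix.smul_mul]
      rw [e1, hXe]
      exact conj_alg P2 Q2 _ _ P1 Q1 _ _ _ _ _ _ a1 b1

set_option maxHeartbeats 1000000 in
lemma riccati_general (a b p : ℕ) (hp : 1 ≤ p) (h₀ r C δ : ℝ) (hh₀ : 0 < h₀) (hr : 0 < r) (hδ : 0 < δ)
    (A : ℂ → ℝ → Matrix (Fin a) (Fin a) ℂ) (B : ℂ → ℝ → Matrix (Fin b) (Fin b) ℂ)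
    (S : ℂ → ℝ → Matrix (Fin a) (Fin b) ℂ) (P : ℂ → ℝ → Matrix (Fin a) (Fin a) ℂ)
    (Q : ℂ → ℝ → Matrix (Fin b) (Fin b) ℂ) (R : ℂ → ℝ → Matrix (Fin b) (Fin a) ℂ)
    (hd : ∀ h ∈ Ioc (0:ℝ) h₀, DifferentiableOn ℂ (fun z => A z h) (Metric.ball 0 r) ∧
      DifferentiableOn ℂ (fun z => B z h) (Metric.ball 0 r) ∧
      DifferentiableOn ℂ (fun z => S z h) (Metric.ball 0 r) ∧
      DifferentiableOn ℂ (fun z => P z h) (Metric.ball 0 r) ∧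
      DifferentiableOn ℂ (fun z => Q z h) (Metric.ball 0 r) ∧
      DifferentiableOn ℂ (fun z => R z h) (Metric.ball 0 r))
    (hbd : ∀ z ∈ Metric.ball (0:ℂ) r, ∀ h ∈ Ioc (0:ℝ) h₀, ‖A z h‖ ≤ C ∧ ‖B z h‖ ≤ C ∧
      ‖S z h‖ ≤ C ∧ ‖P z h‖ ≤ C ∧ ‖Q z h‖ ≤ C ∧ ‖R z h‖ ≤ C)
    (hsep : ∀ h ∈ Ioc (0:ℝ) h₀, ∀ μ ∈ spectrum ℂ (A 0 h), ∀ ν ∈ spectrum ℂ (B 0 h), δ ≤ ‖μ - ν‖) :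
    ∃ ρ ∈ Ioc (0:ℝ) r, ∃ h₁ ∈ Ioc (0:ℝ) h₀, ∃ C' > 0, ∀ h ∈ Ioc (0:ℝ) h₁,
      ∃ (β : ℂ → Matrix (Fin a) (Fin b) ℂ) (β₀ : Matrix (Fin a) (Fin b) ℂ),
      Tendsto β (𝓝[SlitBall ρ] 0) (𝓝 β₀) ∧ ∀ z ∈ SlitBall ρ, ‖β z‖ ≤ C' ∧
        ∃ β' : Matrix (Fin a) (Fin b) ℂ, HasDerivAt β β' z ∧
        (z * (h:ℂ)) • β' = (A z h + (h:ℂ) ^ p • P z h) * β z - β z * (B z h + (h:ℂ) ^ p • Q z h)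
          + S z h - (h:ℂ) ^ (2 * p) • (β z * R z h * β z) := by
  have h0ball : (0:ℂ) ∈ Metric.ball (0:ℂ) r := Metric.mem_ball_self hr
  have hC0 : 0 ≤ C := (norm_nonneg _).trans (hbd 0 h0ball h₀ ⟨hh₀, le_rfl⟩).1
  obtain ⟨e, he0, hdiag⟩ := riccati_diag (m := Fin a) (n := Fin b) δ hδ
  set η : ℝ := e / (3 * (a + b + 1)) with hη
  have hη0 : 0 < η := by positivity
  have hη3 : η * (a + b + 1) = e / 3 := by rw [hη]; field_simp
  have ha0 : (0:ℝ) ≤ a := Nat.cast_nonneg _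
  have hb0 : (0:ℝ) ≤ b := Nat.cast_nonneg _
  obtain ⟨KA, hKA0, hKA⟩ := tri_fin η hη0 a C hC0
  obtain ⟨KB, hKB0, hKB⟩ := tri_fin η hη0 b C hC0
  set K : ℝ := a * KA + b * KB with hK
  have hK0 : 0 ≤ K := by positivity
  set M : ℝ := K * C * K with hM
  have hM0 : 0 ≤ M := by positivity
  set L : ℝ := K * (2 * C / r) * K with hL
  have hL0 : 0 ≤ L := by positivity
  set r₁ : ℝ := min (min r 1) (e / (3 * (L + 1))) with hr₁
  have hr₁0 : 0 < r₁ := by rw [hr₁]; positivity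
  have hr₁r : r₁ ≤ r := (min_le_left _ _).trans (min_le_left _ _)
  have hr₁1 : r₁ ≤ 1 := (min_le_left _ _).trans (min_le_right _ _)
  have hr₁L : L * r₁ ≤ e / 3 := by
    have h1 : r₁ * (3 * (L + 1)) ≤ e := by
      rw [← le_div_iff₀ (by positivity)]; exact min_le_right _ _
    nlinarith
  obtain ⟨ε, hε0, ρ, ⟨hρ0, hρr⟩, Cβ, hCβ, H⟩ := hdiag M r₁ hM0 hr₁0 hr₁1
  set h₁ : ℝ := min (min h₀ 1) (min ε (min (e / 3) ε / (M + 1))) with hh₁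
  have hm0 : 0 < min (e / 3) ε := by positivity
  have hh₁0 : 0 < h₁ := by rw [hh₁]; positivity
  have hh₁a : h₁ ≤ h₀ := (min_le_left _ _).trans (min_le_left _ _)
  have hh₁b : h₁ ≤ 1 := (min_le_left _ _).trans (min_le_right _ _)
  have hh₁c : h₁ ≤ ε := (min_le_right _ _).trans (min_le_left _ _)
  have hh₁d : h₁ * M ≤ min (e / 3) ε := by
    have h1 : h₁ * (M + 1) ≤ min (e / 3) ε := by
      rw [← le_div_iff₀ (by positivity)]; exact (min_le_right _ _).trans (min_le_right _ _)
    nlinarith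
  refine ⟨ρ, ⟨hρ0, hρr.trans hr₁r⟩, h₁, ⟨hh₁0, hh₁a⟩, K * Cβ * K + 1, by positivity, ?_⟩
  intro h hh
  have hh' : h ∈ Ioc (0:ℝ) h₀ := ⟨hh.1, hh.2.trans hh₁a⟩
  have hh1 : h ≤ 1 := hh.2.trans hh₁b
  have hhM : h * M ≤ min (e / 3) ε := (mul_le_mul_of_nonneg_right hh.2 hM0).trans hh₁d
  have hpow : ∀ q : ℕ, 1 ≤ q → ‖(h:ℂ) ^ q‖ ≤ h := fun q hq => by
    rw [norm_pow, Complex.norm_real, Real.norm_of_nonneg hh.1.le]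
    calc h ^ q ≤ h ^ 1 := pow_le_pow_of_le_one hh.1.le hh1 hq
      _ = h := pow_one h
  obtain ⟨dA, dB, dS, dP, dQ, dR⟩ := hd h hh'
  obtain ⟨P2, Q2, μ, a1, a2, a3, a4, a5, a6⟩ := hKA (A 0 h) fun i j =>
    (entry_le _ _ _).trans (hbd 0 h0ball h hh').1
  obtain ⟨P1, Q1, ν, b1, b2, b3, b4, b5, b6⟩ := hKB (B 0 h) fun i j =>
    (entry_le _ _ _).trans (hbd 0 h0ball h hh').2.1
  have pa : 0 ≤ a * KA := by positivity
  have pb : 0 ≤ b * KB := by positivity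
  have nP2 : ‖P2‖ ≤ K := by
    have := norm_le_of_entry P2 KA hKA0 a3
    rw [Fintype.card_fin] at this; linarith
  have nQ2 : ‖Q2‖ ≤ K := by
    have := norm_le_of_entry Q2 KA hKA0 a4
    rw [Fintype.card_fin] at this; linarith
  have nP1 : ‖P1‖ ≤ K := by
    have := norm_le_of_entry P1 KB hKB0 b3
    rw [Fintype.card_fin] at this; linarith
  have nQ1 : ‖Q1‖ ≤ K := by
    have := norm_le_of_entry Q1 KB hKB0 b4
    rw [Fintype.card_fin] at this; linarith
  have nA : ‖Q2 * A 0 h * P2 - Matrix.diagonal μ‖ ≤ e / 3 := by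
    have := norm_le_of_entry _ η hη0.le a6
    rw [Fintype.card_fin] at this; nlinarith
  have nB : ‖Q1 * B 0 h * P1 - Matrix.diagonal ν‖ ≤ e / 3 := by
    have := norm_le_of_entry _ η hη0.le b6
    rw [Fintype.card_fin] at this; nlinarith
  have hsub : Metric.ball (0:ℂ) r₁ ⊆ Metric.ball (0:ℂ) r := Metric.ball_subset_ball hr₁r
  have hO := Metric.isOpen_ball (x := (0:ℂ)) (ε := r₁)
  have hLe : K * (2 * C / r * r₁) * K ≤ e / 3 := by
    refine le_trans (le_of_eq ?_) hr₁L
    rw [hL]; ring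
  have hMe : K * (h * C) * K ≤ min (e / 3) ε := by
    refine le_trans (le_of_eq ?_) hhM
    rw [hM]; ring
  obtain ⟨X, X₀, hXt, hX⟩ := H h hh.1 (hh.2.trans hh₁c) μ ν
    (fun i j => hsep h hh' _ (a5 i) _ (b5 j))
    (fun z => Q2 * (A z h + (h:ℂ) ^ p • P z h) * P2 - Matrix.diagonal μ)
    (fun z => Q1 * (B z h + (h:ℂ) ^ p • Q z h) * P1 - Matrix.diagonal ν)
    (fun z => (h:ℂ) ^ (2 * p) • (Q1 * R z h * P2))
    (fun z => Q2 * S z h * P1)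
    (diff_conj_add hO _ _ _ _ (fun z => A z h) (fun z => P z h) (dA.mono hsub) (dP.mono hsub))
    (diff_conj_add hO _ _ _ _ (fun z => B z h) (fun z => Q z h) (dB.mono hsub) (dQ.mono hsub))
    (diff_conj_smul hO _ _ _ (fun z => R z h) (dR.mono hsub))
    (diff_conj hO _ _ (fun z => S z h) (dS.mono hsub))
    (by
      intro z hz
      obtain ⟨c1, c2, c3, c4, c5, c6⟩ := hbd z (hsub hz) h hh'
      refine ⟨?_, ?_, ?_, norm_conj_le _ _ _ _ _ nQ2 nP1 c3⟩
      · refine (conj_bound Q2 P2 (A z h) (A 0 h) _ _ K _ _ (h * C) nQ2 nP2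
          (lip_ball (fun z => A z h) C r r₁ hC0 hr hr₁r dA (fun w hw => (hbd w hw h hh').1) z hz) nA ?_).trans ?_
        · rw [norm_smul]
          exact mul_le_mul (hpow p hp) c4 (norm_nonneg _) hh.1.le
        · linarith [hMe.trans (min_le_left _ _)]
      · refine (conj_bound Q1 P1 (B z h) (B 0 h) _ _ K _ _ (h * C) nQ1 nP1
          (lip_ball (fun z => B z h) C r r₁ hC0 hr hr₁r dB (fun w hw => (hbd w hw h hh').2.1) z hz) nB ?_).trans ?_
        · rw [norm_smul]
          exact mul_le_mul (hpow p hp) c5 (norm_nonneg _) hh.1.le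
        · linarith [hMe.trans (min_le_left _ _)]
      · rw [norm_smul]
        exact (mul_le_mul (hpow (2 * p) (by omega)) (norm_conj_le _ _ _ _ _ nQ1 nP2 c6)
          (norm_nonneg _) hh.1.le).trans (hhM.trans (min_le_right _ _)))
  exact conj_tail P2 Q2 (Matrix.diagonal μ) P1 Q1 (Matrix.diagonal ν) K Cβ h nP2 nQ1 a1 b1 ρ
    ((h:ℂ) ^ (2 * p)) (fun z => A z h + (h:ℂ) ^ p • P z h) (fun z => B z h + (h:ℂ) ^ p • Q z h)
    (fun z => S z h) (fun z => R z h) X X₀ hXt hX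

end General

end Helpers

section Assembly
open MeasureTheory Filter Topology

variable {m n : Type} [Fintype m] [Fintype n] [DecidableEq m] [DecidableEq n]

lemma norm_one_matrix_le : ‖(1 : Matrix m m ℂ)‖ ≤ 1 := by
  rw [← Matrix.diagonal_one, Matrix.linfty_opNorm_diagonal]
  exact (pi_norm_le_iff_of_nonneg zero_le_one).2 fun i => by simp

lemma neumann (T : Matrix m m ℂ) (hT : ‖T - 1‖ ≤ 1 / 2) :
    IsUnit T ∧ ‖T‖ ≤ 2 ∧ ‖T⁻¹‖ ≤ 2 := by
  have h1 : IsUnit T := by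
    have : CompleteSpace (Matrix m m ℂ) := FiniteDimensional.complete ℂ _
    have := isUnit_one_sub_of_norm_lt_one (x := 1 - T) (by
      rw [norm_sub_rev]; linarith)
    rwa [sub_sub_cancel] at this
  have h2 := norm_one_matrix_le (m := m)
  refine ⟨h1, ?_, ?_⟩
  · calc ‖T‖ = ‖(T - 1) + 1‖ := by rw [sub_add_cancel]
      _ ≤ ‖T - 1‖ + ‖(1 : Matrix m m ℂ)‖ := norm_add_le _ _
      _ ≤ 2 := by linarith
  · have h3 : T * T⁻¹ = 1 := Matrix.mul_nonsing_inv T ((Matrix.isUnit_iff_isUnit_det T).1 h1)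
    have h4 : T⁻¹ = 1 - (T - 1) * T⁻¹ := by
      rw [sub_mul, h3, one_mul, sub_sub_cancel]
    have h5 : ‖T⁻¹‖ ≤ ‖(1 : Matrix m m ℂ)‖ + ‖T - 1‖ * ‖T⁻¹‖ := by
      calc ‖T⁻¹‖ = ‖1 - (T - 1) * T⁻¹‖ := by rw [← h4]
        _ ≤ ‖(1 : Matrix m m ℂ)‖ + ‖(T - 1) * T⁻¹‖ := norm_sub_le _ _
        _ ≤ _ := by gcongr; exact norm_mul_le _ _
    nlinarith [norm_nonneg T⁻¹]

lemma offdiag_norm (α : Matrix m n ℂ) (β : Matrix n m ℂ) (c : ℝ) (hc : 0 ≤ c)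
    (hα : ‖α‖ ≤ c) (hβ : ‖β‖ ≤ c) :
    ‖(Matrix.fromBlocks 0 α β 0 : Matrix (m ⊕ n) (m ⊕ n) ℂ)‖ ≤ Fintype.card (m ⊕ n) * c := by
  apply norm_le_of_entry _ _ hc
  rintro (i | i) (j | j)
  · simpa using hc
  · exact (entry_le α i j).trans hα
  · exact (entry_le β i j).trans hβ
  · simpa using hc

lemma hasDerivAt_blocks {α : ℂ → Matrix m n ℂ} {β : ℂ → Matrix n m ℂ} {α' : Matrix m n ℂ}
    {β' : Matrix n m ℂ} {z : ℂ} (hα : HasDerivAt α α' z) (hβ : HasDerivAt β β' z) (c : ℂ) :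
    HasDerivAt (fun w => (Matrix.fromBlocks 1 (c • α w) (c • β w) 1 : Matrix (m ⊕ n) (m ⊕ n) ℂ))
      (Matrix.fromBlocks 0 (c • α') (c • β') 0) z := by
  apply hasDerivAt_of_entry
  rintro (i | i) (j | j)
  · simpa using hasDerivAt_const z ((1 : Matrix m m ℂ) i j)
  · exact (hasDerivAt_entry hα i j).const_mul c
  · exact (hasDerivAt_entry hβ i j).const_mul c
  · simpa using hasDerivAt_const z ((1 : Matrix n n ℂ) i j)

lemma tendsto_blocks {α : ℂ → Matrix m n ℂ} {β : ℂ → Matrix n m ℂ} {α₀ : Matrix m n ℂ}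
    {β₀ : Matrix n m ℂ} {F : Filter ℂ} (hα : Tendsto α F (𝓝 α₀)) (hβ : Tendsto β F (𝓝 β₀)) (c : ℂ) :
    Tendsto (fun w => (Matrix.fromBlocks 1 (c • α w) (c • β w) 1 : Matrix (m ⊕ n) (m ⊕ n) ℂ)) F
      (𝓝 (Matrix.fromBlocks 1 (c • α₀) (c • β₀) 1)) := by
  have ha := tendsto_iff_norm_sub_tendsto_zero.1 hα
  have hb := tendsto_iff_norm_sub_tendsto_zero.1 hβ
  refine tendsto_iff_norm_sub_tendsto_zero.2 ?_
  have hlim : Tendsto (fun w => ‖c‖ * (Fintype.card (m ⊕ n) * (‖α w - α₀‖ + ‖β w - β₀‖))) F (𝓝 0) := by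
    simpa using ((ha.add hb).const_mul (Fintype.card (m ⊕ n) : ℝ)).const_mul ‖c‖
  refine squeeze_zero (fun _ => norm_nonneg _) (fun w => ?_) hlim
  have e1 : (Matrix.fromBlocks 1 (c • α w) (c • β w) 1 : Matrix (m ⊕ n) (m ⊕ n) ℂ) -
      Matrix.fromBlocks 1 (c • α₀) (c • β₀) 1 =
      c • Matrix.fromBlocks 0 (α w - α₀) (β w - β₀) 0 := by
    rw [sub_eq_add_neg, Matrix.fromBlocks_neg, Matrix.fromBlocks_add, Matrix.fromBlocks_smul]
    simp [smul_sub, sub_eq_add_neg]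
  rw [e1, norm_smul]
  exact mul_le_mul_of_nonneg_left (offdiag_norm _ _ _ (by positivity)
    (le_add_of_nonneg_right (norm_nonneg _)) (le_add_of_nonneg_left (norm_nonneg _))) (norm_nonneg _)

lemma diff_submatrix {k l : Type} [Fintype k] [Fintype l] {f : ℂ → Matrix m n ℂ} {U : Set ℂ}
    (hU : IsOpen U) (hf : DifferentiableOn ℂ f U) (u : k → m) (v : l → n) :
    DifferentiableOn ℂ (fun z => (f z).submatrix u v) U := fun z hz =>
  (hasDerivAt_of_entry (f := fun z => (f z).submatrix u v) (f' := (deriv f z).submatrix u v)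
    (fun i j => hasDerivAt_entry (hf.differentiableAt (hU.mem_nhds hz)).hasDerivAt (u i) (v j)
    )).differentiableAt.differentiableWithinAt

lemma norm_submatrix_le {k l : Type} [Fintype k] [Fintype l] (X : Matrix m n ℂ) (c : ℝ)
    (hX : ‖X‖ ≤ c) (u : k → m) (v : l → n) : ‖X.submatrix u v‖ ≤ Fintype.card l * c :=
  norm_le_of_entry _ _ ((norm_nonneg _).trans hX) fun i j => (entry_le X _ _).trans hX

lemma block_identity (A₁ D₁ : Matrix m m ℂ) (A₂ D₂ : Matrix n n ℂ)
    (t11 : Matrix m m ℂ) (t12 : Matrix m n ℂ) (t21 : Matrix n m ℂ) (t22 : Matrix n n ℂ)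
    (α α' : Matrix m n ℂ) (β β' : Matrix n m ℂ) (c s : ℂ)
    (hD₁ : D₁ = A₁ + c • t11 + (c * c) • (t12 * β)) (hD₂ : D₂ = A₂ + c • t22 + (c * c) • (t21 * α))
    (hβ : s • β' = (A₂ + c • t22) * β - β * (A₁ + c • t11) + t21 - (c * c) • (β * t12 * β))
    (hα : s • α' = (A₁ + c • t11) * α - α * (A₂ + c • t22) + t12 - (c * c) • (α * t21 * α)) :
    s • (Matrix.fromBlocks 0 (c • α') (c • β') 0 : Matrix (m ⊕ n) (m ⊕ n) ℂ) =
      (Matrix.fromBlocks A₁ 0 0 A₂ + c • Matrix.fromBlocks t11 t12 t21 t22) *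
        Matrix.fromBlocks 1 (c • α) (c • β) 1 -
      Matrix.fromBlocks 1 (c • α) (c • β) 1 * Matrix.fromBlocks D₁ 0 0 D₂ := by
  rw [Matrix.fromBlocks_smul, Matrix.fromBlocks_smul, Matrix.fromBlocks_add,
    Matrix.fromBlocks_multiply, Matrix.fromBlocks_multiply, sub_eq_add_neg, Matrix.fromBlocks_neg,
    Matrix.fromBlocks_add, smul_comm s c α', smul_comm s c β', hα, hβ, hD₁, hD₂]
  congr 1
  · simp [smul_smul]
  · simp only [Matrix.mul_add, Matrix.add_mul, Matrix.mul_smul, Matrix.smul_mul, smul_add, smul_sub,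
      smul_smul, Matrix.mul_one, Matrix.mul_zero, Matrix.mul_assoc, zero_add]
    module
  · simp only [Matrix.mul_add, Matrix.add_mul, Matrix.mul_smul, Matrix.smul_mul, smul_add, smul_sub,
      smul_smul, Matrix.mul_one, Matrix.mul_zero, Matrix.mul_assoc, zero_add, add_zero]
    module
  · simp [smul_smul]
    abel

end Assembly

lemma slitBall_mono {a b : ℝ} (h : a ≤ b) : SlitBall a ⊆ SlitBall b :=
  fun _ hz => ⟨hz.1.trans_le h, hz.2⟩

/-- **Exact block-diagonalization at a regular-singular point** (Corollary 1.6).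
Consider the singular ODE `z h W' = blockdiag(A₁₁,A₂₂)(z,h) W + h^p Θ(z,h) W`, `p ≥ 1`, with
`A₁₁, A₂₂, Θ` analytic in `z` and continuous in `h` on `B(0,r) × (0,h₀]`, and with `A₁₁(0)`
and `A₂₂(0)` having no eigenvalues in common (uniformly in `h`).  Then there is a uniformly
bounded block-diagonalizing conjugator `T = Id + O(h^p)`, with uniformly bounded inverse,
analytic in `z` on a slit ball around `z = 0` with branch cut along the negative real axis
and continuous at `z = 0`; i.e. `W = T Z` converts the system to an exactly block-diagonal
system `z h Z' = blockdiag(D₁₁,D₂₂) Z`, encoded by `z h T' = 𝒜 T − T D` on the slit ball. -/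
theorem exact_block_diagonalization_at_singular_point
    (n₁ n₂ : ℕ) (p : ℕ) (hp : 1 ≤ p) (h₀ r : ℝ) (hh₀ : 0 < h₀) (hr : 0 < r)
    (A₁ : ℂ → ℝ → Matrix (Fin n₁) (Fin n₁) ℂ) (A₂ : ℂ → ℝ → Matrix (Fin n₂) (Fin n₂) ℂ)
    (Θ : ℂ → ℝ → Matrix (Fin n₁ ⊕ Fin n₂) (Fin n₁ ⊕ Fin n₂) ℂ)
    -- analyticity in z and continuity in h on B(0,r) × (0,h₀], with uniform bounds
    (hanal : ∀ h ∈ Ioc (0:ℝ) h₀, DifferentiableOn ℂ (fun z => A₁ z h) (Metric.ball 0 r) ∧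
      DifferentiableOn ℂ (fun z => A₂ z h) (Metric.ball 0 r) ∧
      DifferentiableOn ℂ (fun z => Θ z h) (Metric.ball 0 r))
    (hcont : ∀ z ∈ Metric.ball (0:ℂ) r,
      ContinuousOn (fun h => (A₁ z h, A₂ z h, Θ z h)) (Ioc 0 h₀))
    (hbd : ∃ C : ℝ, ∀ z ∈ Metric.ball (0:ℂ) r, ∀ h ∈ Ioc (0:ℝ) h₀,
      ‖A₁ z h‖ ≤ C ∧ ‖A₂ z h‖ ≤ C ∧ ‖Θ z h‖ ≤ C)
    -- A₁₁(0) and A₂₂(0) have no eigenvalues in common, uniformly in h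
    (hsep : ∃ δ : ℝ, 0 < δ ∧ ∀ h ∈ Ioc (0:ℝ) h₀,
      ∀ μ₁ ∈ spectrum ℂ (A₁ 0 h), ∀ μ₂ ∈ spectrum ℂ (A₂ 0 h), δ ≤ ‖μ₁ - μ₂‖) :
    ∃ ρ ∈ Ioc (0:ℝ) r, ∃ h₁ ∈ Ioc (0:ℝ) h₀,
    ∃ (T T' : ℂ → ℝ → Matrix (Fin n₁ ⊕ Fin n₂) (Fin n₁ ⊕ Fin n₂) ℂ)
      (D₁ : ℂ → ℝ → Matrix (Fin n₁) (Fin n₁) ℂ) (D₂ : ℂ → ℝ → Matrix (Fin n₂) (Fin n₂) ℂ)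
      (C' : ℝ), 0 < C' ∧
      -- T is analytic on the slit ball and continuous at z = 0
      (∀ h ∈ Ioc (0:ℝ) h₁, DifferentiableOn ℂ (fun z => T z h) (SlitBall ρ)) ∧
      (∀ h ∈ Ioc (0:ℝ) h₁, ∃ T₀ : Matrix (Fin n₁ ⊕ Fin n₂) (Fin n₁ ⊕ Fin n₂) ℂ,
        Filter.Tendsto (fun z => T z h) (nhdsWithin 0 (SlitBall ρ)) (nhds T₀)) ∧
      -- T = Id + O(h^p), uniformly bounded with uniformly bounded inverse
      (∀ h ∈ Ioc (0:ℝ) h₁, ∀ z ∈ SlitBall ρ,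
        IsUnit (T z h) ∧ ‖T z h‖ ≤ C' ∧ ‖(T z h)⁻¹‖ ≤ C' ∧ ‖T z h - 1‖ ≤ C' * h ^ p) ∧
      -- the conjugation identity  z h T' = 𝒜 T − T D  on the slit ball
      (∀ h ∈ Ioc (0:ℝ) h₁, ∀ z ∈ SlitBall ρ,
        HasDerivAt (fun w => T w h) (T' z h) z ∧
        (z * (h : ℂ)) • T' z h
          = (Matrix.fromBlocks (A₁ z h) 0 0 (A₂ z h) + (h : ℂ) ^ p • Θ z h) * T z h
            - T z h * Matrix.fromBlocks (D₁ z h) 0 0 (D₂ z h)) := by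
  classical
  obtain ⟨C, hC⟩ := hbd
  obtain ⟨δ, hδ, hsep⟩ := hsep
  have hO := Metric.isOpen_ball (x := (0:ℂ)) (ε := r)
  have hC0 : 0 ≤ C := (norm_nonneg _).trans
    (hC 0 (Metric.mem_ball_self hr) h₀ ⟨hh₀, le_rfl⟩).1
  have hn₁ : (0:ℝ) ≤ n₁ := Nat.cast_nonneg _
  have hn₂ : (0:ℝ) ≤ n₂ := Nat.cast_nonneg _
  set N : ℝ := (n₁ + n₂ + 1) * C with hN
  have hCN : C ≤ N := by rw [hN]; nlinarith
  have hN1 : n₁ * C ≤ N := by rw [hN]; nlinarith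
  have hN2 : n₂ * C ≤ N := by rw [hN]; nlinarith
  have b1 : ∀ {k : Type} [Fintype k] (u : k → Fin n₁ ⊕ Fin n₂), ∀ z ∈ Metric.ball (0:ℂ) r,
      ∀ h ∈ Ioc (0:ℝ) h₀, ‖(Θ z h).submatrix u (Sum.inl : Fin n₁ → _)‖ ≤ N := by
    intro k _ u z hz h hh
    refine (norm_submatrix_le _ C (hC z hz h hh).2.2 u _).trans ?_
    rwa [Fintype.card_fin]
  have b2 : ∀ {k : Type} [Fintype k] (u : k → Fin n₁ ⊕ Fin n₂), ∀ z ∈ Metric.ball (0:ℂ) r,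
      ∀ h ∈ Ioc (0:ℝ) h₀, ‖(Θ z h).submatrix u (Sum.inr : Fin n₂ → _)‖ ≤ N := by
    intro k _ u z hz h hh
    refine (norm_submatrix_le _ C (hC z hz h hh).2.2 u _).trans ?_
    rwa [Fintype.card_fin]
  obtain ⟨ρb, ⟨hρb0, hρbr⟩, hb, ⟨hb0, hbh₀⟩, Cb, hCb, Hb⟩ :=
    riccati_general n₂ n₁ p hp h₀ r N δ hh₀ hr hδ A₂ A₁
      (fun z h => (Θ z h).submatrix Sum.inr Sum.inl) (fun z h => (Θ z h).submatrix Sum.inr Sum.inr)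
      (fun z h => (Θ z h).submatrix Sum.inl Sum.inl) (fun z h => (Θ z h).submatrix Sum.inl Sum.inr)
      (fun h hh => ⟨(hanal h hh).2.1, (hanal h hh).1, diff_submatrix hO (hanal h hh).2.2 _ _,
        diff_submatrix hO (hanal h hh).2.2 _ _, diff_submatrix hO (hanal h hh).2.2 _ _,
        diff_submatrix hO (hanal h hh).2.2 _ _⟩)
      (fun z hz h hh => ⟨(hC z hz h hh).2.1.trans hCN, (hC z hz h hh).1.trans hCN, b1 _ z hz h hh,
        b2 _ z hz h hh, b1 _ z hz h hh, b2 _ z hz h hh⟩)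
      (fun h hh μ hμ ν hν => by rw [norm_sub_rev]; exact hsep h hh ν hν μ hμ)
  obtain ⟨ρa, ⟨hρa0, hρar⟩, ha, ⟨ha0, hah₀⟩, Ca, hCa, Ha⟩ :=
    riccati_general n₁ n₂ p hp h₀ r N δ hh₀ hr hδ A₁ A₂
      (fun z h => (Θ z h).submatrix Sum.inl Sum.inr) (fun z h => (Θ z h).submatrix Sum.inl Sum.inl)
      (fun z h => (Θ z h).submatrix Sum.inr Sum.inr) (fun z h => (Θ z h).submatrix Sum.inr Sum.inl)
      (fun h hh => ⟨(hanal h hh).1, (hanal h hh).2.1, diff_submatrix hO (hanal h hh).2.2 _ _,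
        diff_submatrix hO (hanal h hh).2.2 _ _, diff_submatrix hO (hanal h hh).2.2 _ _,
        diff_submatrix hO (hanal h hh).2.2 _ _⟩)
      (fun z hz h hh => ⟨(hC z hz h hh).1.trans hCN, (hC z hz h hh).2.1.trans hCN, b2 _ z hz h hh,
        b1 _ z hz h hh, b2 _ z hz h hh, b1 _ z hz h hh⟩)
      (fun h hh μ hμ ν hν => hsep h hh μ hμ ν hν)
  set G : ℝ := (n₁ + n₂) * (Ca + Cb) with hG
  have hG0 : 0 ≤ G := by positivity
  set ρ : ℝ := min ρa ρb with hρ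
  set h₁ : ℝ := min (min ha hb) (min 1 (1 / (2 * (G + 1)))) with hh₁
  have hρ0 : 0 < ρ := by rw [hρ]; positivity
  have hh₁0 : 0 < h₁ := by rw [hh₁]; positivity
  have h1a : h₁ ≤ ha := (min_le_left _ _).trans (min_le_left _ _)
  have h1b : h₁ ≤ hb := (min_le_left _ _).trans (min_le_right _ _)
  have h11 : h₁ ≤ 1 := (min_le_right _ _).trans (min_le_left _ _)
  have h1G : h₁ * G ≤ 1 / 2 := by
    have h1 : h₁ * (2 * (G + 1)) ≤ 1 := by
      rw [← le_div_iff₀ (by positivity)]; exact (min_le_right _ _).trans (min_le_right _ _)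
    nlinarith
  choose! β β₀ hβt hβ using fun (h : ℝ) (hh : h ∈ Ioc (0:ℝ) hb) => Hb h hh
  choose! α α₀ hαt hα using fun (h : ℝ) (hh : h ∈ Ioc (0:ℝ) ha) => Ha h hh
  have sa : SlitBall ρ ⊆ SlitBall ρa := slitBall_mono (min_le_left _ _)
  have sb : SlitBall ρ ⊆ SlitBall ρb := slitBall_mono (min_le_right _ _)
  have key : ∀ h ∈ Ioc (0:ℝ) h₁, ∀ z ∈ SlitBall ρ, HasDerivAt (fun w => (Matrix.fromBlocks 1
      ((h:ℂ) ^ p • α h w) ((h:ℂ) ^ p • β h w) 1 : Matrix (Fin n₁ ⊕ Fin n₂) (Fin n₁ ⊕ Fin n₂) ℂ))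
      (Matrix.fromBlocks 0 ((h:ℂ) ^ p • deriv (α h) z) ((h:ℂ) ^ p • deriv (β h) z) 0) z := by
    intro h hh z hz
    obtain ⟨-, α', ha', -⟩ := hα h ⟨hh.1, hh.2.trans h1a⟩ z (sa hz)
    obtain ⟨-, β', hb', -⟩ := hβ h ⟨hh.1, hh.2.trans h1b⟩ z (sb hz)
    exact hasDerivAt_blocks ha'.differentiableAt.hasDerivAt hb'.differentiableAt.hasDerivAt _
  refine ⟨ρ, ⟨hρ0, (min_le_left _ _).trans hρar⟩, h₁, ⟨hh₁0, h1a.trans hah₀⟩,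
    fun z h => Matrix.fromBlocks 1 ((h:ℂ) ^ p • α h z) ((h:ℂ) ^ p • β h z) 1,
    fun z h => Matrix.fromBlocks 0 ((h:ℂ) ^ p • deriv (α h) z) ((h:ℂ) ^ p • deriv (β h) z) 0,
    fun z h => A₁ z h + (h:ℂ) ^ p • (Θ z h).submatrix Sum.inl Sum.inl
      + ((h:ℂ) ^ p * (h:ℂ) ^ p) • ((Θ z h).submatrix Sum.inl Sum.inr * β h z),
    fun z h => A₂ z h + (h:ℂ) ^ p • (Θ z h).submatrix Sum.inr Sum.inr
      + ((h:ℂ) ^ p * (h:ℂ) ^ p) • ((Θ z h).submatrix Sum.inr Sum.inl * α h z),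
    G + 2, by positivity, ?_, ?_, ?_, ?_⟩
  · exact fun h hh z hz => (key h hh z hz).differentiableAt.differentiableWithinAt
  · intro h hh
    exact ⟨_, tendsto_blocks
      ((hαt h ⟨hh.1, hh.2.trans h1a⟩).mono_left (nhdsWithin_mono _ sa))
      ((hβt h ⟨hh.1, hh.2.trans h1b⟩).mono_left (nhdsWithin_mono _ sb)) _⟩
  · intro h hh z hz
    have na := (hα h ⟨hh.1, hh.2.trans h1a⟩ z (sa hz)).1
    have nb := (hβ h ⟨hh.1, hh.2.trans h1b⟩ z (sb hz)).1
    have hoff := offdiag_norm (α h z) (β h z) (Ca + Cb) (by positivity) (by linarith) (by linarith)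
    have hcard : (Fintype.card (Fin n₁ ⊕ Fin n₂) : ℝ) = n₁ + n₂ := by simp
    rw [hcard, ← hG] at hoff
    have e1 : (Matrix.fromBlocks 1 ((h:ℂ) ^ p • α h z) ((h:ℂ) ^ p • β h z) 1 :
        Matrix (Fin n₁ ⊕ Fin n₂) (Fin n₁ ⊕ Fin n₂) ℂ) - 1 =
        (h:ℂ) ^ p • Matrix.fromBlocks 0 (α h z) (β h z) 0 := by
      rw [← Matrix.fromBlocks_one, sub_eq_add_neg, Matrix.fromBlocks_neg, Matrix.fromBlocks_add,
        Matrix.fromBlocks_smul]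
      simp
    have hn : ‖(h:ℂ) ^ p‖ = h ^ p := by
      rw [norm_pow, Complex.norm_real, Real.norm_of_nonneg hh.1.le]
    have hp0 : 0 ≤ h ^ p := pow_nonneg hh.1.le p
    have hp1 : h ^ p ≤ h₁ := by
      calc h ^ p ≤ h ^ 1 := pow_le_pow_of_le_one hh.1.le (hh.2.trans h11) hp
        _ = h := pow_one h
        _ ≤ h₁ := hh.2
    have hle : ‖(Matrix.fromBlocks 1 ((h:ℂ) ^ p • α h z) ((h:ℂ) ^ p • β h z) 1 :
        Matrix (Fin n₁ ⊕ Fin n₂) (Fin n₁ ⊕ Fin n₂) ℂ) - 1‖ ≤ h ^ p * G := by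
      rw [e1, norm_smul, hn]
      exact mul_le_mul_of_nonneg_left hoff hp0
    obtain ⟨u1, u2, u3⟩ := neumann _ (hle.trans ((mul_le_mul_of_nonneg_right hp1 hG0).trans h1G))
    refine ⟨u1, by linarith, by linarith, hle.trans ?_⟩
    nlinarith
  · intro h hh z hz
    refine ⟨key h hh z hz, ?_⟩
    obtain ⟨-, α', ha', hae⟩ := hα h ⟨hh.1, hh.2.trans h1a⟩ z (sa hz)
    obtain ⟨-, β', hb', hbe⟩ := hβ h ⟨hh.1, hh.2.trans h1b⟩ z (sb hz)
    have hpp : (h:ℂ) ^ (2 * p) = (h:ℂ) ^ p * (h:ℂ) ^ p := by rw [two_mul, pow_add]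
    rw [hpp] at hae hbe
    have hΘ : Θ z h = Matrix.fromBlocks ((Θ z h).submatrix Sum.inl Sum.inl)
        ((Θ z h).submatrix Sum.inl Sum.inr) ((Θ z h).submatrix Sum.inr Sum.inl)
        ((Θ z h).submatrix Sum.inr Sum.inr) := (Matrix.fromBlocks_toBlocks (Θ z h)).symm
    have hid := block_identity (A₁ z h) _ (A₂ z h) _ _ _ _ _ (α h z) α' (β h z) β'
      ((h:ℂ) ^ p) (z * (h:ℂ)) rfl rfl hbe hae
    rw [← hΘ] at hid
    have huq := (key h hh z hz).unique (hasDerivAt_blocks ha' hb' ((h:ℂ) ^ p))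
    exact (congrArg (fun Y => (z * (h:ℂ)) • Y) huq).trans hid
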